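/- Let d ∈ ℕ and let (H_i)_{i∈ℕ} be a sequence of finite groups, each with a distinguished generating set of cardinality d. Then there exist, for every subset S ⊆ ℕ, a finitely generated group W_S of subexponential growth together with, for every s ∈ S, an injective homomorphism Ψ_s: [H_s,H_s] → W_S, and constants K_s, L_s ≥ 1 which depend only on s and on the groups H_j with j ∈ S, j < s (in particular not on H_s, nor on H_j for j > s), such that d_perfect(h,h')/K_s ≤ d_{W_S}(Ψ_s(h), Ψ_s(h')) ≤ L_s · d_perfect(h,h') for all h,h' ∈ [H_s,H_s], where d_{W_S} is the word metric on W_S with respect to a fixed finite generating set and d_perfect is the perfect metric on [H_s,H_s]. -/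

import Mathlib

/-- The set of elements of `G` expressible as a product of at most `n`
elements of `S ∪ S⁻¹`. -/
def wordBall {G : Type*} [Group G] (S : Set G) (n : ℕ) : Set G :=
  {g | ∃ l : List G, (∀ x ∈ l, x ∈ S ∨ x⁻¹ ∈ S) ∧ l.length ≤ n ∧ l.prod = g}

/-- The word norm of `g` with respect to `S`. -/
noncomputable def wordNorm {G : Type*} [Group G] (S : Set G) (g : G) : ℕ :=
  sInf {n | ∃ l : List G, (∀ x ∈ l, x ∈ S ∨ x⁻¹ ∈ S) ∧ l.length = n ∧ l.prod = g}

/-- The word metric `d_S(x, y) = ‖x y⁻¹‖_S`. -/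
noncomputable def wordDist {G : Type*} [Group G] (S : Set G) (x y : G) : ℕ :=
  wordNorm S (x * y⁻¹)

/-- `(G, S)` has subexponential growth. -/
def SubexpGrowth {G : Type*} [Group G] (S : Set G) : Prop :=
  ∀ lam : ℝ, 1 < lam → ∀ᶠ n : ℕ in Filter.atTop,
    (Nat.card (wordBall S n) : ℝ) < lam ^ n

/-- A finite group marked with a distinguished generating set of cardinality
`d`. -/
structure MarkedGroup (d : ℕ) : Type 1 where
  carrier : Type
  [grp : Group carrier]
  [fin : Fintype carrier]
  gens : Finset carrier
  card_gens : gens.card = d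
  isGen : Subgroup.closure (gens : Set carrier) = ⊤

attribute [instance] MarkedGroup.grp MarkedGroup.fin

/-- The perfect norm of `h` with respect to the generating set `T`: the least
length of a balanced word (i.e. a word lying in the commutator subgroup of the
free group `F_T`) representing `h`. -/
noncomputable def perfectNorm {H : Type*} [Group H] (T : Set H) (h : H) : ℕ :=
  sInf {n | ∃ L : List (T × Bool),
    FreeGroup.mk L ∈ commutator (FreeGroup T) ∧
    L.length = n ∧
    FreeGroup.lift (fun t : T => (t : H)) (FreeGroup.mk L) = h}

/-- The perfect metric `d_perfect(x, y) = ‖x y⁻¹‖_perfect`. -/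
noncomputable def perfectDist {H : Type*} [Group H] (T : Set H) (x y : H) : ℕ :=
  perfectNorm T (x * y⁻¹)

/-!
All levels are imposed on the single finitely generated group `C₂ * (C₂² × ℤ^(2d))`, which acts on
the binary tree by the recursion of the Grigorchuk group: the lattice `ℤ^(2d)` fixes the ray
`(-1)(-1)⋯` and acts at its end. Level `s` cuts the tree at depth `s + 1`. There, one half of the
lattice translates a torus of exponent `2 ^ (s + 1)`, and the other half multiplies the lamps at
the antipodal points of that torus by the generators of `H_s`. The group `W` is the image of the
product of all levels and of the projection to the lattice.

*Embedding.* Conjugating by `2 ^ s` times a lattice generator, itself conjugated by an element of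
the Grigorchuk group depending on `s`, moves the antipodal lamp of level `s` to the origin. It
acts trivially on the levels `j < s`, where `2 ^ s` vanishes in the torus, and commutes with the
lamps on the levels `j > s`, because it acts elsewhere in the tree. So a balanced word written in
the conjugated lamps spells an element of `[H_s, H_s]` on level `s` and is trivial everywhere
else.

*Lower bound.* A word of length `n` switches at most `n` lamps, and each lamp configuration is
spelled by a word in the generators of `H_s`. If only one lamp is lit and the lattice projection
is trivial, then concatenating these words over all lamps gives a balanced word, as its class in
the abelianization is the image of the lattice projection.

*Growth.* Passing to sections contracts a suitable weight by the factor `9 / 10`, whereas the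
`ℓ¹`-length of the lattice part does not increase. So an element of the ball of radius `n` is
determined, up to the finite information from the levels below `m`, by a tree of depth `m` whose
leaf words consist of few letters and flips and have total lattice length at most `n + C`. A
generating function counts these trees.
-/

section WordMetric

variable {G G' ι : Type*} [Group G] [Group G'] {S : Set G} {g h : G} {m n : ℕ}

theorem wordBall_mono (hmn : m ≤ n) : wordBall S m ⊆ wordBall S n :=
  fun _ ⟨l, hl, hlen, hprod⟩ => ⟨l, hl, hlen.trans hmn, hprod⟩

theorem one_mem_wordBall (S : Set G) (n : ℕ) : (1 : G) ∈ wordBall S n :=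
  ⟨[], by simp, by simp, rfl⟩

theorem mem_wordBall_one (hg : g ∈ S) : g ∈ wordBall S 1 :=
  ⟨[g], by simp [hg], by simp, by simp⟩

theorem mul_mem_wordBall (hg : g ∈ wordBall S m) (hh : h ∈ wordBall S n) :
    g * h ∈ wordBall S (m + n) := by
  obtain ⟨l, hl, hlen, rfl⟩ := hg
  obtain ⟨l', hl', hlen', rfl⟩ := hh
  refine ⟨l ++ l', fun x hx => ?_, by simpa using add_le_add hlen hlen', by simp⟩
  exact (List.mem_append.1 hx).elim (hl x) (hl' x)

theorem inv_mem_wordBall (hg : g ∈ wordBall S n) : g⁻¹ ∈ wordBall S n := by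
  obtain ⟨l, hl, hlen, rfl⟩ := hg
  refine ⟨(l.map (·⁻¹)).reverse, fun x hx => ?_, by simpa using hlen,
    by rw [List.prod_inv_reverse]⟩
  obtain ⟨y, hy, rfl⟩ := List.mem_map.1 (List.mem_reverse.1 hx)
  simpa using (hl y hy).symm

theorem pow_mem_wordBall (hg : g ∈ wordBall S n) (k : ℕ) : g ^ k ∈ wordBall S (k * n) := by
  induction k with
  | zero => simpa using one_mem_wordBall S 0
  | succ k ih => simpa only [pow_succ, add_mul, one_mul] using mul_mem_wordBall ih hg

theorem conj_mem_wordBall (hg : g ∈ wordBall S m) (hh : h ∈ wordBall S n) :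
    g * h * g⁻¹ ∈ wordBall S (2 * m + n) :=
  wordBall_mono (by omega) (mul_mem_wordBall (mul_mem_wordBall hg hh) (inv_mem_wordBall hg))

theorem image_wordBall (f : G →* G') (S : Set G) (n : ℕ) :
    f '' wordBall S n = wordBall (f '' S) n := by
  ext y
  constructor
  · rintro ⟨_, ⟨l, hl, hlen, rfl⟩, rfl⟩
    refine ⟨l.map f, fun y hy => ?_, by simpa using hlen, by rw [map_list_prod]⟩
    obtain ⟨x, hx, rfl⟩ := List.mem_map.1 hy
    rw [← map_inv]
    exact (hl x hx).imp (Set.mem_image_of_mem f) (Set.mem_image_of_mem f)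
  · rintro ⟨l, hl, hlen, rfl⟩
    have hlift : ∀ x ∈ l, ∃ g, f g = x ∧ (g ∈ S ∨ g⁻¹ ∈ S) := by
      intro x hx
      obtain ⟨g, hg, hgx⟩ | ⟨g, hg, hgx⟩ := hl x hx
      · exact ⟨g, hgx, .inl hg⟩
      · exact ⟨g⁻¹, by rw [map_inv, hgx, inv_inv], .inr (by rwa [inv_inv])⟩
    choose! k hk hkS using hlift
    refine ⟨(l.map k).prod, ⟨l.map k, fun x hx => ?_, by simpa using hlen, rfl⟩, ?_⟩
    · obtain ⟨y, hy, rfl⟩ := List.mem_map.1 hx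
      exact hkS y hy
    · rw [map_list_prod, List.map_map, List.map_congr_left (g := id) (by simpa using hk),
        List.map_id]

theorem wordNorm_le_of_mem_wordBall (hg : g ∈ wordBall S n) : wordNorm S g ≤ n := by
  obtain ⟨l, hl, hlen, hprod⟩ := hg
  refine le_trans (Nat.sInf_le ?_) hlen
  exact ⟨l, hl, rfl, hprod⟩

theorem exists_mem_wordBall (hS : Subgroup.closure S = ⊤) (g : G) : ∃ n, g ∈ wordBall S n := by
  have hg : g ∈ Subgroup.closure S := hS ▸ Subgroup.mem_top g
  induction hg using Subgroup.closure_induction with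
  | mem x hx => exact ⟨1, mem_wordBall_one hx⟩
  | one => exact ⟨0, one_mem_wordBall S 0⟩
  | mul x y _ _ hx hy => exact ⟨_, mul_mem_wordBall hx.choose_spec hy.choose_spec⟩
  | inv x _ hx => exact ⟨_, inv_mem_wordBall hx.choose_spec⟩

theorem mem_wordBall_wordNorm (hS : Subgroup.closure S = ⊤) (g : G) :
    g ∈ wordBall S (wordNorm S g) := by
  obtain ⟨n, l, hl, -, hprod⟩ := exists_mem_wordBall hS g
  obtain ⟨l', hl', hlen', hprod'⟩ : wordNorm S g ∈ {n | ∃ l : List G,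
      (∀ x ∈ l, x ∈ S ∨ x⁻¹ ∈ S) ∧ l.length = n ∧ l.prod = g} := Nat.sInf_mem ⟨_, l, hl, rfl, hprod⟩
  exact ⟨l', hl', hlen'.le, hprod'⟩

theorem freeGroup_lift_mem_wordBall [DecidableEq ι] {c : ι → G} (hc : ∀ i, c i ∈ wordBall S m)
    (w : FreeGroup ι) : FreeGroup.lift c w ∈ wordBall S (m * w.norm) := by
  suffices h : ∀ L : List (ι × Bool), FreeGroup.lift c (.mk L) ∈ wordBall S (m * L.length) by
    simpa only [FreeGroup.mk_toWord, FreeGroup.norm] using h w.toWord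
  intro L
  induction L with
  | nil => simpa using one_mem_wordBall S 0
  | cons x L ih =>
    rw [FreeGroup.lift_mk, List.map_cons, List.prod_cons, List.length_cons, mul_add_one, add_comm]
    refine mul_mem_wordBall ?_ (by rwa [FreeGroup.lift_mk] at ih)
    rcases x with ⟨i, _ | _⟩
    exacts [inv_mem_wordBall (hc i), hc i]

theorem subexpGrowth_of_forall_card_le {c : ℕ}
    (hS : ∀ r : ℝ, 1 < r → ∃ K : ℝ, ∀ n : ℕ, (Nat.card (wordBall S n) : ℝ) ≤ K * r ^ (c * n)) :
    SubexpGrowth S := by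
  intro lam hlam
  have hlam0 : 0 ≤ lam := zero_le_one.trans hlam.le
  let r : ℝ := lam ^ ((c + 1 : ℕ) : ℝ)⁻¹
  have hr : 1 < r := Real.one_lt_rpow hlam (by positivity)
  have hpow : r ^ (c + 1) = lam := Real.rpow_inv_natCast_pow hlam0 c.succ_ne_zero
  obtain ⟨K, hK⟩ := hS r hr
  filter_upwards [(tendsto_pow_atTop_atTop_of_one_lt hr).eventually_gt_atTop K] with n hn
  calc (Nat.card (wordBall S n) : ℝ) ≤ K * r ^ (c * n) := hK n
    _ < r ^ n * r ^ (c * n) := by gcongr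
    _ = lam ^ n := by rw [← pow_add, ← hpow, ← pow_mul]; ring_nf

end WordMetric

section PerfectNorm

variable {G H ι κ : Type*} [Group G] [Group H]

theorem map_mem_commutator (f : G →* H) {g : G} (hg : g ∈ commutator G) : f g ∈ commutator H :=
  Subgroup.commutator_mono le_top le_top
    (Subgroup.map_commutator ⊤ ⊤ f ▸ Subgroup.mem_map_of_mem f hg)

theorem exists_mem_commutator_map_eq {f : G →* H} (hf : Function.Surjective f) {h : H}
    (hh : h ∈ commutator H) : ∃ g ∈ commutator G, f g = h := by
  rwa [commutator_def, ← MonoidHom.range_eq_top.2 hf, MonoidHom.range_eq_map,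
    ← Subgroup.map_commutator] at hh

theorem freeGroup_lift_map (g : κ → G) (f : ι → κ) (w : FreeGroup ι) :
    FreeGroup.lift g (FreeGroup.map f w) = FreeGroup.lift (g ∘ f) w :=
  FreeGroup.lift_unique ((FreeGroup.lift g).comp (FreeGroup.map f)) (fun i => by simp)

variable [DecidableEq ι]

theorem perfectNorm_range_lift_le (θ : ι → H) {w : FreeGroup ι}
    (hw : w ∈ commutator (FreeGroup ι)) :
    perfectNorm (Set.range θ) (FreeGroup.lift θ w) ≤ w.norm := by
  let f : ι → Set.range θ := Set.rangeFactorization θ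
  have hmk : FreeGroup.mk (w.toWord.map fun x => (f x.1, x.2)) = FreeGroup.map f w := by
    rw [← FreeGroup.map.mk, FreeGroup.mk_toWord]
  refine Nat.sInf_le ⟨w.toWord.map fun x => (f x.1, x.2), ?_, by rw [List.length_map]; rfl, ?_⟩
  · rw [hmk]
    exact map_mem_commutator _ hw
  · rw [hmk, freeGroup_lift_map]
    rfl

theorem exists_balanced_norm_le_perfectNorm {θ : ι → H}
    (hθ : Subgroup.closure (Set.range θ) = ⊤) {h : H} (hh : h ∈ commutator H) :
    ∃ w ∈ commutator (FreeGroup ι), FreeGroup.lift θ w = h ∧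
      w.norm ≤ perfectNorm (Set.range θ) h := by
  classical
  have hsurj : Function.Surjective (FreeGroup.lift fun t : Set.range θ => (t : H)) := by
    rw [← MonoidHom.range_eq_top, FreeGroup.range_lift_eq_closure, Subtype.range_coe, hθ]
  obtain ⟨w₀, hw₀, hlift₀⟩ := exists_mem_commutator_map_eq hsurj hh
  obtain ⟨L, hL, hlen, hlift⟩ : perfectNorm (Set.range θ) h ∈ {n | ∃ L : List (Set.range θ × Bool),
      FreeGroup.mk L ∈ commutator (FreeGroup (Set.range θ)) ∧ L.length = n ∧
      FreeGroup.lift (fun t : Set.range θ => (t : H)) (FreeGroup.mk L) = h} :=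
    Nat.sInf_mem ⟨_, w₀.toWord, by rwa [FreeGroup.mk_toWord], rfl, by rwa [FreeGroup.mk_toWord]⟩
  let f : Set.range θ → ι := Set.rangeSplitting θ
  refine ⟨FreeGroup.map f (.mk L), ?_, ?_, ?_⟩
  · exact map_mem_commutator _ hL
  · rw [freeGroup_lift_map, ← hlift]
    congr 2
    exact funext (Set.apply_rangeSplitting θ)
  · rw [FreeGroup.map.mk, ← hlen]
    simpa using FreeGroup.norm_mk_le (L₁ := L.map fun x => (f x.1, x.2))

end PerfectNorm

section WreathProducts

variable {D Q B : Type*} [Group D] [Group Q] [CommMonoid B]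

/-- The inclusion of the base group into the regular wreath product. -/
def wreathBase : (Q → D) →* D ≀ᵣ Q where
  toFun f := ⟨f, 1⟩
  map_one' := rfl
  map_mul' f g := by ext <;> simp

@[simp]
theorem wreathBase_left (f : Q → D) : (wreathBase f).left = f := rfl

@[simp]
theorem wreathBase_right (f : Q → D) : (wreathBase f).right = 1 := rfl

theorem wreathBase_injective : Function.Injective (wreathBase : (Q → D) →* D ≀ᵣ Q) :=
  fun _ _ h => congrArg RegularWreathProduct.left h

/-- The inclusion of a single coordinate into the regular wreath product. -/
def wreathSingle [DecidableEq Q] (q : Q) : D →* D ≀ᵣ Q :=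
  wreathBase.comp (MonoidHom.mulSingle (fun _ => D) q)

theorem wreathSingle_apply [DecidableEq Q] (q : Q) (d : D) :
    wreathSingle q d = wreathBase (Pi.mulSingle q d) := rfl

theorem inl_conj_wreathSingle [DecidableEq Q] (q q₀ : Q) (d : D) :
    .inl q * wreathSingle q₀ d * (.inl q)⁻¹ = wreathSingle (q * q₀) d := by
  ext x
  · obtain rfl | hx := eq_or_ne x (q * q₀)
    · simp [wreathSingle_apply]
    · have hx' : q⁻¹ * x ≠ q₀ := fun h => hx (by rw [← h, mul_inv_cancel_left])
      simp [wreathSingle_apply, hx, hx']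
  · simp [wreathSingle_apply]

theorem wreathBase_conj_wreathSingle [DecidableEq Q] (f : Q → D) (q : Q) (d : D) :
    wreathBase f * wreathSingle q d * (wreathBase f)⁻¹ = wreathSingle q (f q * d * (f q)⁻¹) := by
  rw [wreathSingle_apply, ← map_inv, ← map_mul, ← map_mul, wreathSingle_apply]
  congr 1
  ext x
  obtain rfl | hx := eq_or_ne x q
  · simp
  · simp [hx]

theorem commute_wreathSingle [DecidableEq Q] {q q' : Q} (h : q ≠ q') (d d' : D) :
    Commute (wreathSingle q d) (wreathSingle q' d') :=
  (Pi.mulSingle_commute (f := fun _ => D) h d d').map wreathBase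

theorem wreathSingle_injective [DecidableEq Q] (q : Q) :
    Function.Injective (wreathSingle q : D →* D ≀ᵣ Q) :=
  wreathBase_injective.comp (Pi.mulSingle_injective (M := fun _ => D) q)

/-- Coordinatewise extension of a relation `R` between a group and a commutative monoid of costs to
a wreath product: costs are chosen in every coordinate and multiplied together. -/
def wreathRel (Q : Type*) [Group Q] [Fintype Q] (R : Submonoid (D × B)) :
    Submonoid ((D ≀ᵣ Q) × B) where
  carrier := {p | ∃ c : Q → B, (∀ q, (p.1.left q, c q) ∈ R) ∧ ∏ q, c q = p.2}
  one_mem' := ⟨1, fun _ => R.one_mem, by simp⟩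
  mul_mem' := by
    rintro ⟨g, _⟩ ⟨g', _⟩ ⟨c, hc, rfl⟩ ⟨c', hc', rfl⟩
    refine ⟨fun q => c q * c' (g.right⁻¹ * q), fun q => R.mul_mem (hc q) (hc' _), ?_⟩
    rw [Finset.prod_mul_distrib]
    exact congrArg _ (Equiv.prod_comp (Equiv.mulLeft g.right⁻¹) c')

variable [Fintype Q] {R : Submonoid (D × B)}

theorem mem_wreathRel {g : D ≀ᵣ Q} {b : B} :
    (g, b) ∈ wreathRel Q R ↔ ∃ c : Q → B, (∀ q, (g.left q, c q) ∈ R) ∧ ∏ q, c q = b := Iff.rfl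

theorem inl_mem_wreathRel (q : Q) :
    ((RegularWreathProduct.inl q : D ≀ᵣ Q), (1 : B)) ∈ wreathRel Q R :=
  ⟨1, fun _ => R.one_mem, by simp⟩

theorem mem_of_wreathSingle_mem [DecidableEq Q] {q₀ : Q} {d : D} {b : B}
    (h : (wreathSingle q₀ d, b) ∈ wreathRel Q R) : (d, b) ∈ R := by
  obtain ⟨c, hc, rfl⟩ := h
  suffices hs : ∀ s : Finset Q, ((if q₀ ∈ s then d else 1), ∏ q ∈ s, c q) ∈ R by
    simpa using hs Finset.univ
  intro s
  induction s using Finset.induction_on with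
  | empty => exact R.one_mem
  | insert q s hq ih =>
    rw [Finset.prod_insert hq]
    convert R.mul_mem (hc q) ih using 1
    obtain rfl | hne := eq_or_ne q q₀
    · simp [wreathSingle_apply, hq]
    · simp [wreathSingle_apply, hne, hne.symm]

end WreathProducts

section IterWreath

variable {G B : Type*}

/-- The `n`-fold regular wreath product `(G ≀ C₂) ≀ ⋯ ≀ C₂`. -/
def IterWreath (G : Type*) : ℕ → Type _
  | 0 => G
  | n + 1 => IterWreath G n ≀ᵣ ℤˣ

instance instFiniteIterWreath {G : Type*} [Finite G] : ∀ n, Finite (IterWreath G n)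
  | 0 => ‹Finite G›
  | n + 1 =>
    have : Finite (IterWreath G n) := instFiniteIterWreath n
    inferInstanceAs (Finite (IterWreath G n ≀ᵣ ℤˣ))

variable [Group G] [CommMonoid B]

instance instGroupIterWreath : ∀ n, Group (IterWreath G n)
  | 0 => ‹Group G›
  | n + 1 =>
    have := instGroupIterWreath n
    inferInstanceAs (Group (IterWreath G n ≀ᵣ ℤˣ))

/-- The inclusion of the last coordinate into the iterated wreath product. -/
def iterSingle : ∀ n, G →* IterWreath G n
  | 0 => MonoidHom.id G
  | n + 1 => (wreathSingle (-1)).comp (iterSingle n)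

theorem iterSingle_injective : ∀ n, Function.Injective (iterSingle n : G →* IterWreath G n)
  | 0 => Function.injective_id
  | n + 1 => (wreathSingle_injective (-1)).comp (iterSingle_injective n)

/-- The iteration of `wreathRel`. -/
def iterRel (R : Submonoid (G × B)) : ∀ n, Submonoid (IterWreath G n × B)
  | 0 => R
  | n + 1 => wreathRel ℤˣ (iterRel R n)

theorem mem_of_iterSingle_mem {R : Submonoid (G × B)} {g : G} {b : B} :
    ∀ {n}, (iterSingle n g, b) ∈ iterRel R n → (g, b) ∈ R
  | 0, h => h
  | _ + 1, h => mem_of_iterSingle_mem (mem_of_wreathSingle_mem h)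

end IterWreath

/-- The Klein four-group. Its elements `(-1, 1)`, `(-1, -1)`, `(1, -1)` play the roles of the
generators `b`, `c`, `d` of the Grigorchuk group; the first coordinate records whether the first
section is the flip. -/
abbrev Klein : Type := ℤˣ × ℤˣ

/-- The automorphism of the Klein group sending `b`, `c`, `d` to `c`, `d`, `b`. -/
def Klein.shift : Klein ≃* Klein where
  toFun v := (v.1 * v.2, v.1)
  invFun v := (v.2, v.1 * v.2)
  left_inv v := by decide +revert
  right_inv v := by decide +revert
  map_mul' v w := by ext1 <;> simp [mul_mul_mul_comm]

/-- The letters other than the flip: pairs of a Klein element and a vector of a free abelian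
group. -/
abbrev Letter (κ : Type*) : Type _ := Klein × (κ → Multiplicative ℤ)

/-- The action of `Klein.shift` on letters. -/
def Letter.shift {κ : Type*} : Letter κ →* Letter κ :=
  Klein.shift.toMonoidHom.prodMap (MonoidHom.id _)

@[simp]
theorem Letter.shift_snd {κ : Type*} (b : Letter κ) : (Letter.shift b).2 = b.2 := rfl

/-- The free product `C₂ * (C₂² × ℤ^κ)`. All groups in the construction are quotients of it. -/
abbrev PreGrigorchuk (κ : Type*) : Type _ := Monoid.Coprod ℤˣ (Letter κ)

namespace PreGrigorchuk

open Monoid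

variable {κ G : Type*} [Group G]

/-- The inclusion of the first free factor. -/
def flipHom : ℤˣ →* PreGrigorchuk κ := Coprod.inl

/-- The generator of the first free factor. -/
def rootFlip : PreGrigorchuk κ := flipHom (-1)

/-- The inclusion of the second free factor. -/
def letter : Letter κ →* PreGrigorchuk κ := Coprod.inr

/-- The inclusion of the free abelian group. -/
def latticeHom : (κ → Multiplicative ℤ) →* PreGrigorchuk κ := letter.comp (MonoidHom.inr _ _)

theorem rootFlip_mul_self : (rootFlip : PreGrigorchuk κ) * rootFlip = 1 := by
  rw [rootFlip, ← map_mul, Int.units_mul_self, map_one]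

theorem rootFlip_inv : (rootFlip : PreGrigorchuk κ)⁻¹ = rootFlip :=
  inv_eq_of_mul_eq_one_left rootFlip_mul_self

/-- The projection to the free abelian group. -/
def latticeProj : PreGrigorchuk κ →* (κ → Multiplicative ℤ) := Coprod.lift 1 (MonoidHom.snd _ _)

@[simp]
theorem latticeProj_flipHom (x : ℤˣ) : latticeProj (flipHom x : PreGrigorchuk κ) = 1 :=
  Coprod.lift_apply_inl ..

@[simp]
theorem latticeProj_letter (b : Letter κ) : latticeProj (letter b) = b.2 := Coprod.lift_apply_inr ..

/-- The representation in which the flip permutes two coordinates and letters act coordinatewise,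
by `f₀` on the coordinate `1` and by `f₁` on the coordinate `-1`. -/
def wreathRep (f₀ f₁ : Letter κ →* G) : PreGrigorchuk κ →* G ≀ᵣ ℤˣ :=
  Coprod.lift RegularWreathProduct.inl
    (wreathBase.comp (MonoidHom.pi fun q => if q = 1 then f₀ else f₁))

theorem wreathRep_flipHom (f₀ f₁ : Letter κ →* G) (x : ℤˣ) :
    wreathRep f₀ f₁ (flipHom x) = .inl x := Coprod.lift_apply_inl ..

theorem wreathRep_letter (f₀ f₁ : Letter κ →* G) (b : Letter κ) :
    wreathRep f₀ f₁ (letter b) = wreathBase fun q => if q = 1 then f₀ b else f₁ b := by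
  refine (Coprod.lift_apply_inr ..).trans (congrArg wreathBase (funext fun q => ?_))
  change (if q = 1 then f₀ else f₁) b = _
  split_ifs <;> rfl

theorem wreathRep_letter_of_left_eq_one {f₀ f₁ : Letter κ →* G} {b : Letter κ} (hb : f₀ b = 1) :
    wreathRep f₀ f₁ (letter b) = wreathSingle (-1) (f₁ b) := by
  rw [wreathRep_letter, wreathSingle_apply]
  congr 1
  ext q
  obtain rfl | rfl := Int.units_eq_one_or q <;> simp [hb, Pi.mulSingle]

theorem wreathRep_letter_of_right_eq_one {f₀ f₁ : Letter κ →* G} {b : Letter κ} (hb : f₁ b = 1) :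
    wreathRep f₀ f₁ (letter b) = wreathSingle 1 (f₀ b) := by
  rw [wreathRep_letter, wreathSingle_apply]
  congr 1
  ext q
  obtain rfl | rfl := Int.units_eq_one_or q <;> simp [hb, Pi.mulSingle]

/-- The self-similar lift of a representation of the pre-Grigorchuk group, given by the recursion
of the Grigorchuk group: the sections of a letter are a power of the flip and the shifted letter. -/
def liftRep (ρ : PreGrigorchuk κ →* G) : PreGrigorchuk κ →* G ≀ᵣ ℤˣ :=
  wreathRep (ρ.comp (flipHom.comp ((MonoidHom.fst _ _).comp (MonoidHom.fst _ _))))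
    (ρ.comp (letter.comp Letter.shift))

theorem liftRep_flipHom (ρ : PreGrigorchuk κ →* G) (x : ℤˣ) : liftRep ρ (flipHom x) = .inl x :=
  wreathRep_flipHom ..

theorem liftRep_letter (ρ : PreGrigorchuk κ →* G) (b : Letter κ) :
    liftRep ρ (letter b) =
      wreathBase fun q => if q = 1 then ρ (flipHom b.1.1) else ρ (letter b.shift) :=
  wreathRep_letter ..

theorem liftRep_latticeHom (ρ : PreGrigorchuk κ →* G) (z : κ → Multiplicative ℤ) :
    liftRep ρ (latticeHom z) = wreathSingle (-1) (ρ (latticeHom z)) :=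
  wreathRep_letter_of_left_eq_one ((congrArg ρ (map_one flipHom)).trans (map_one ρ))

/-- The `n`-th iterate of `liftRep`. -/
def iterLift (ρ : PreGrigorchuk κ →* G) : ∀ n, PreGrigorchuk κ →* IterWreath G n
  | 0 => ρ
  | n + 1 => liftRep (iterLift ρ n)

end PreGrigorchuk

/-- A word `b₀ a b₁ a ⋯ a bₙ` alternating between letters and the flip `a`, stored as the letter
`b₀` and the list of the letters `b₁, …, bₙ`. -/
abbrev Word (κ : Type*) : Type _ := Letter κ × List (Letter κ)

namespace Word

open PreGrigorchuk

variable {κ G : Type*} [Group G]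

/-- The element of the pre-Grigorchuk group represented by a word. -/
def eval (w : Word κ) : PreGrigorchuk κ := letter w.1 * (w.2.map fun b => rootFlip * letter b).prod

/-- The empty word. -/
def nil : Word κ := (1, [])

/-- Left multiplication of a word by an element of the first free factor. -/
def flipMul (x : ℤˣ) (w : Word κ) : Word κ := if x = 1 then w else (1, w.1 :: w.2)

/-- Left multiplication of a word by a letter. -/
def letterMul (b : Letter κ) (w : Word κ) : Word κ := (b * w.1, w.2)

@[simp]
theorem eval_singleton (b : Letter κ) : eval (b, []) = letter b := by simp [eval]

@[simp]
theorem eval_nil : (nil : Word κ).eval = 1 := by rw [nil, eval_singleton, map_one]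

theorem eval_cons (b c : Letter κ) (L : List (Letter κ)) :
    eval (b, c :: L) = letter b * (rootFlip * eval (c, L)) := by
  simp only [eval, List.map_cons, List.prod_cons, mul_assoc]

@[simp]
theorem eval_flipMul (x : ℤˣ) (w : Word κ) : (w.flipMul x).eval = flipHom x * w.eval := by
  obtain rfl | rfl := Int.units_eq_one_or x
  · simp [flipMul]
  · exact (eval_cons 1 w.1 w.2).trans (by rw [map_one, one_mul, rootFlip])

@[simp]
theorem eval_letterMul (b : Letter κ) (w : Word κ) : (w.letterMul b).eval = letter b * w.eval := by
  rw [eval, eval, letterMul, map_mul, mul_assoc]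

/-- The permutation of the two coordinates induced by a word. -/
def parity (w : Word κ) : ℤˣ := (-1) ^ w.2.length

/-- The sections of a word at the coordinates `1` and `-1`. -/
def sections (w : Word κ) : Word κ × Word κ :=
  go w.1 w.2
where
  /-- Recursion for `sections`: passing a flip exchanges the two coordinates. -/
  go : Letter κ → List (Letter κ) → Word κ × Word κ
    | b, [] => (nil.flipMul b.1.1, nil.letterMul b.shift)
    | b, c :: L => ((go c L).2.flipMul b.1.1, (go c L).1.letterMul b.shift)

theorem sections_singleton (b : Letter κ) :
    sections (b, []) = (nil.flipMul b.1.1, nil.letterMul b.shift) := rfl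

theorem sections_cons (b c : Letter κ) (L : List (Letter κ)) :
    sections (b, c :: L) =
      ((sections (c, L)).2.flipMul b.1.1, (sections (c, L)).1.letterMul b.shift) := rfl

theorem liftRep_eval (ρ : PreGrigorchuk κ →* G) (w : Word κ) :
    liftRep ρ w.eval =
      ⟨fun q => if q = 1 then ρ w.sections.1.eval else ρ w.sections.2.eval, w.parity⟩ := by
  obtain ⟨b, L⟩ := w
  induction L generalizing b with
  | nil => simp [parity, sections_singleton, liftRep_letter, wreathBase]
  | cons c L ih =>
    rw [eval_cons, map_mul, map_mul, ih, liftRep_letter, rootFlip, liftRep_flipHom, sections_cons]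
    ext q
    · obtain rfl | rfl := Int.units_eq_one_or q <;> simp
    · simp [parity, pow_succ']

theorem latticeProj_eval_sections (w : Word κ) :
    latticeProj w.sections.1.eval * latticeProj w.sections.2.eval = latticeProj w.eval := by
  obtain ⟨b, L⟩ := w
  induction L generalizing b with
  | nil => simp [sections_singleton]
  | cons c L ih =>
    rw [eval_cons, map_mul, map_mul, ← ih, sections_cons]
    simp [rootFlip, mul_left_comm, mul_comm]

end Word

section Weights

variable {κ : Type*}

/-- Weights of the Klein letters. Together with the weight `8` of the flip `a`, they make each of
the substitutions `b ↦ (a, c)`, `c ↦ (a, d)`, `d ↦ (1, b)` contract the weight of a letter and the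
flip next to it by the factor `9 / 10`. -/
def Klein.weight (v : Klein) : ℕ :=
  if v = 1 then 0 else if v = (-1, 1) then 18 else if v = (-1, -1) then 15 else 12

open scoped Classical in
/-- The weight of a letter. -/
noncomputable def Letter.weight (b : Letter κ) : ℕ :=
  if b.1 = 1 ∧ b.2 ≠ 1 then 12 else b.1.weight

theorem Klein.weight_mul_le (v w : Klein) : (v * w).weight ≤ v.weight + w.weight := by
  decide +revert

theorem Klein.twelve_le_weight {v : Klein} (hv : v ≠ 1) : 12 ≤ v.weight := by
  decide +revert

theorem Klein.weight_le (v : Klein) : v.weight ≤ 18 := by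
  decide +revert

theorem Letter.weight_le (b : Letter κ) : b.weight ≤ 18 := by
  rw [Letter.weight]
  split_ifs
  exacts [by norm_num, Klein.weight_le _]

@[simp]
theorem Letter.weight_one : (1 : Letter κ).weight = 0 := by
  simp [Letter.weight, Klein.weight]

theorem Letter.klein_weight_le_weight (b : Letter κ) : b.1.weight ≤ b.weight := by
  by_cases hb : b.1 = 1 <;> simp [Letter.weight, hb, Klein.weight]

theorem Letter.twelve_le_weight {b : Letter κ} (hb : b ≠ 1) : 12 ≤ b.weight := by
  by_cases hv : b.1 = 1
  · have hz : b.2 ≠ 1 := fun hz => hb (Prod.ext hv hz)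
    simp [Letter.weight, hv, hz]
  · exact (Klein.twelve_le_weight hv).trans b.klein_weight_le_weight

theorem Letter.weight_mul_le (b c : Letter κ) : (b * c).weight ≤ b.weight + c.weight := by
  rw [Letter.weight]
  split_ifs with h
  · by_cases hb : b = 1
    · rw [hb, one_mul] at h
      exact le_add_left (Letter.twelve_le_weight fun hc => h.2 (by rw [hc, Prod.snd_one]))
    · exact le_add_right (Letter.twelve_le_weight hb)
  · exact (Klein.weight_mul_le b.1 c.1).trans
      (add_le_add b.klein_weight_le_weight c.klein_weight_le_weight)

theorem Klein.weight_shift_le {v : Klein} (hv : v ≠ 1) :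
    10 * ((if v.1 = 1 then 0 else 8) + v.shift.weight) ≤ 9 * (8 + v.weight) := by
  decide +revert

theorem Letter.weight_shift_le (b : Letter κ) :
    10 * ((if b.1.1 = 1 then 0 else 8) + b.shift.weight) ≤ 9 * (8 + b.weight) := by
  have hshift : b.shift.1 = b.1.shift := rfl
  by_cases hv : b.1 = 1
  · rw [Letter.weight, Letter.weight, hshift, hv, map_one, Letter.shift_snd]
    split_ifs <;> simp_all [Klein.weight]
  · simpa [Letter.weight, hshift, hv] using Klein.weight_shift_le hv

end Weights

section Costs

variable {κ : Type*}

/-- The `ℓ¹`-norm on the free abelian group. -/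
def latticeLength [Fintype κ] (z : κ → Multiplicative ℤ) : ℕ := ∑ i, (z i).toAdd.natAbs

theorem latticeLength_one [Fintype κ] : latticeLength (1 : κ → Multiplicative ℤ) = 0 := by
  simp [latticeLength]

theorem latticeLength_inv [Fintype κ] (z : κ → Multiplicative ℤ) :
    latticeLength z⁻¹ = latticeLength z := by
  simp [latticeLength]

theorem latticeLength_mul_le [Fintype κ] (z z' : κ → Multiplicative ℤ) :
    latticeLength (z * z') ≤ latticeLength z + latticeLength z' := by
  rw [latticeLength, latticeLength, latticeLength, ← Finset.sum_add_distrib]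
  exact Finset.sum_le_sum fun i _ => Int.natAbs_add_le _ _

theorem latticeLength_mulSingle [Fintype κ] [DecidableEq κ] (i : κ) (n : Multiplicative ℤ) :
    latticeLength (Pi.mulSingle i n) = n.toAdd.natAbs := by
  rw [latticeLength, Finset.sum_eq_single i (fun j _ hj => by simp [hj]) (by simp),
    Pi.mulSingle_eq_same]

namespace Word

/-- The total cost of a word when each flip costs `c` and each letter `b` costs `f b`. -/
def cost (c : ℕ) (f : Letter κ → ℕ) (w : Word κ) : ℕ := f w.1 + (w.2.map fun b => c + f b).sum

variable {c : ℕ} {f : Letter κ → ℕ}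

theorem cost_flipMul_le (hf : f 1 = 0) (x : ℤˣ) (w : Word κ) :
    (w.flipMul x).cost c f ≤ (if x = 1 then 0 else c) + w.cost c f := by
  rw [flipMul]
  split_ifs <;> simp [cost, hf, add_assoc]

theorem cost_letterMul_le (hmul : ∀ b b', f (b * b') ≤ f b + f b') (b : Letter κ) (w : Word κ) :
    (w.letterMul b).cost c f ≤ f b + w.cost c f := by
  simpa only [letterMul, cost, ← add_assoc] using Nat.add_le_add_right (hmul b w.1) _

theorem cost_sections_le {A B : ℕ} (hf : f 1 = 0) (hmul : ∀ b b', f (b * b') ≤ f b + f b')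
    (hshift : ∀ b, A * ((if b.1.1 = 1 then 0 else c) + f b.shift) ≤ B * (c + f b)) (w : Word κ) :
    A * (w.sections.1.cost c f + w.sections.2.cost c f) ≤ B * (w.cost c f + c) := by
  have hnil : (nil : Word κ).cost c f = 0 := by simp [cost, nil, hf]
  obtain ⟨b, L⟩ := w
  have hb := hshift b
  induction L generalizing b with
  | nil =>
    have h₁ := cost_flipMul_le (c := c) hf b.1.1 nil
    have h₂ := cost_letterMul_le (c := c) hmul b.shift nil
    rw [hnil, add_zero] at h₁ h₂
    rw [sections_singleton]
    refine (Nat.mul_le_mul_left A (add_le_add h₁ h₂)).trans ?_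
    simpa [cost, add_comm] using hb
  | cons b' L ih =>
    have h₁ := cost_flipMul_le (c := c) hf b.1.1 (sections (b', L)).2
    have h₂ := cost_letterMul_le (c := c) hmul b.shift (sections (b', L)).1
    have hw : cost c f (b, b' :: L) = (c + f b) + cost c f (b', L) := by
      simp only [cost, List.map_cons, List.sum_cons]; ring
    rw [sections_cons, hw]
    calc _ ≤ A * ((if b.1.1 = 1 then 0 else c) + f b.shift) +
          A * ((sections (b', L)).1.cost c f + (sections (b', L)).2.cost c f) := by
          rw [← mul_add]; exact Nat.mul_le_mul_left A (by dsimp only; omega)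
      _ ≤ B * (c + f b) + B * (cost c f (b', L) + c) := add_le_add hb (ih b' (hshift b'))
      _ = _ := by ring

/-- The length of a word in which weights count `p` times and lattice parts count once. -/
noncomputable def length [Fintype κ] (p : ℕ) (w : Word κ) : ℕ :=
  p * w.cost 8 Letter.weight + w.cost 0 fun b => latticeLength b.2

theorem length_eq_cost [Fintype κ] (p : ℕ) :
    (length p : Word κ → ℕ) =
      cost (p * 8) fun b => p * b.weight + latticeLength b.2 := by
  ext ⟨b, L⟩
  simp only [length, cost]
  induction L with
  | nil => simp
  | cons c L ih => simp only [List.map_cons, List.sum_cons] at ih ⊢; linarith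

end Word

end Costs

section Portraits

open PreGrigorchuk

variable {κ : Type*}

/-- Binary trees of depth `m` with inner vertices labelled by permutations of the two children and
leaves labelled by words. -/
def Portrait (κ : Type*) : ℕ → Type _
  | 0 => Word κ
  | m + 1 => ℤˣ × Portrait κ m × Portrait κ m

namespace Portrait

/-- The sum of a function over the words at the leaves. -/
def total (F : Word κ → ℕ) : ∀ m, Portrait κ m → ℕ
  | 0, w => F w
  | m + 1, P => total F m P.2.1 + total F m P.2.2

theorem total_mul_add (p : ℕ) (F F' : Word κ → ℕ) :
    ∀ m P, total (fun w => p * F w + F' w) m P = p * total F m P + total F' m P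
  | 0, _ => rfl
  | m + 1, P => by
    simp only [total, total_mul_add p F F' m]
    ring

end Portrait

theorem Portrait.succ_ext_iff {m : ℕ} {x x' : ℤˣ} {P Q P' Q' : Portrait κ m} :
    (show Portrait κ (m + 1) from (x, P, Q)) = (x', P', Q') ↔ x = x' ∧ P = P' ∧ Q = Q' := by
  rw [← Prod.mk_inj, ← Prod.mk_inj]
  rfl

/-- The tree of iterated sections of a word. -/
def Word.portrait : ∀ m, Word κ → Portrait κ m
  | 0, w => w
  | m + 1, w => (w.parity, w.sections.1.portrait m, w.sections.2.portrait m)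

theorem Word.latticeProj_eval_eq_of_portrait_eq :
    ∀ {m : ℕ} {w w' : Word κ}, w.portrait m = w'.portrait m →
      latticeProj w.eval = latticeProj w'.eval
  | 0, _, _, h => congrArg (fun w => latticeProj w.eval) h
  | m + 1, w, w', h => by
    obtain ⟨-, h₁, h₂⟩ : _ ∧ _ ∧ _ := Portrait.succ_ext_iff.1 h
    rw [← latticeProj_eval_sections w, ← latticeProj_eval_sections w',
      latticeProj_eval_eq_of_portrait_eq h₁, latticeProj_eval_eq_of_portrait_eq h₂]

theorem Word.liftRep_eval_congr {G : Type*} [Group G] {ρ : PreGrigorchuk κ →* G} {w w' : Word κ}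
    (h₀ : w.parity = w'.parity) (h₁ : ρ w.sections.1.eval = ρ w'.sections.1.eval)
    (h₂ : ρ w.sections.2.eval = ρ w'.sections.2.eval) :
    liftRep ρ w.eval = liftRep ρ w'.eval := by
  rw [liftRep_eval, liftRep_eval, h₀, h₁, h₂]

theorem Word.iterLift_eval_eq_of_portrait_eq {G : Type*} [Group G] (ρ : PreGrigorchuk κ →* G) :
    ∀ {m k : ℕ} {w w' : Word κ}, m ≤ k → w.portrait m = w'.portrait m →
      iterLift ρ k w.eval = iterLift ρ k w'.eval
  | 0, _, _, _, _, h => congrArg (fun w => iterLift ρ _ (eval w)) h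
  | m + 1, k + 1, w, w', hk, h => by
    obtain ⟨h₀, h₁, h₂⟩ : _ ∧ _ ∧ _ := Portrait.succ_ext_iff.1 h
    have hk' : m ≤ k := Nat.le_of_succ_le_succ hk
    exact liftRep_eval_congr h₀ (iterLift_eval_eq_of_portrait_eq ρ hk' h₁)
      (iterLift_eval_eq_of_portrait_eq ρ hk' h₂)

theorem Word.exists_total_portrait_le {A B c : ℕ} {F : Word κ → ℕ}
    (hF : ∀ w, A * (F w.sections.1 + F w.sections.2) ≤ B * (F w + c)) (m : ℕ) :
    ∃ C, ∀ w : Word κ, A ^ m * Portrait.total F m (w.portrait m) ≤ B ^ m * F w + C := by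
  induction m with
  | zero => exact ⟨0, fun w => le_rfl⟩
  | succ m ih =>
    obtain ⟨C, hC⟩ := ih
    refine ⟨B ^ (m + 1) * c + 2 * A * C, fun w => ?_⟩
    calc A ^ (m + 1) * Portrait.total F (m + 1) (w.portrait (m + 1))
        = A * (A ^ m * Portrait.total F m (w.sections.1.portrait m) +
          A ^ m * Portrait.total F m (w.sections.2.portrait m)) := by
          simp only [Portrait.total, portrait]; ring
      _ ≤ A * ((B ^ m * F w.sections.1 + C) + (B ^ m * F w.sections.2 + C)) := by
          gcongr <;> apply hC
      _ = B ^ m * (A * (F w.sections.1 + F w.sections.2)) + 2 * A * C := by ring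
      _ ≤ B ^ m * (B * (F w + c)) + 2 * A * C :=
          Nat.add_le_add_right (Nat.mul_le_mul_left _ (hF w)) _
      _ = _ := by ring

theorem Word.exists_total_length_portrait_le [Fintype κ] (p : ℕ) :
    ∃ m C, ∀ w : Word κ, Portrait.total (length p) m (w.portrait m) ≤ length 1 w + C := by
  obtain ⟨m, hm⟩ : ∃ m : ℕ, p * 9 ^ m ≤ 10 ^ m := by
    obtain ⟨m, hm⟩ := pow_unbounded_of_one_lt (p : ℚ) (show (1 : ℚ) < 10 / 9 by norm_num)
    refine ⟨m, ?_⟩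
    rw [div_pow, lt_div_iff₀ (by positivity)] at hm
    exact_mod_cast hm.le
  obtain ⟨C, hC⟩ := exists_total_portrait_le (κ := κ)
    (cost_sections_le Letter.weight_one Letter.weight_mul_le Letter.weight_shift_le) m
  obtain ⟨C', hC'⟩ := exists_total_portrait_le (κ := κ) (A := 1) (B := 1)
    (cost_sections_le (c := 0) (f := fun b => latticeLength b.2) latticeLength_one
      (fun b b' => latticeLength_mul_le b.2 b'.2) (fun b => by simp)) m
  refine ⟨m, p * C + C', fun w => ?_⟩
  have hweight : p * Portrait.total (cost 8 Letter.weight) m (w.portrait m) ≤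
      w.cost 8 Letter.weight + p * C := by
    refine Nat.le_of_mul_le_mul_left (c := 10 ^ m) ?_ (by positivity)
    calc _ = p * (10 ^ m * Portrait.total (cost 8 Letter.weight) m (w.portrait m)) := by ring
      _ ≤ p * (9 ^ m * w.cost 8 Letter.weight + C) := by gcongr; exact hC w
      _ = (p * 9 ^ m) * w.cost 8 Letter.weight + 1 * (p * C) := by ring
      _ ≤ 10 ^ m * w.cost 8 Letter.weight + 10 ^ m * (p * C) := by
          gcongr; exact Nat.one_le_pow' _ _
      _ = _ := by ring
  have hlattice := hC' w
  simp only [one_pow, one_mul] at hlattice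
  have hsplit := Portrait.total_mul_add p (cost 8 Letter.weight)
    (cost 0 fun b : Letter κ => latticeLength b.2) m (w.portrait m)
  change Portrait.total (length p) m (w.portrait m) = _ at hsplit
  rw [hsplit, length]
  omega

end Portraits

section GeneratingFunctions

open scoped ENNReal NNReal

variable {α ι : Type*} {q : ℝ≥0∞}

theorem tsum_fin_prod_apply (x : α → ℝ≥0∞) (n : ℕ) :
    ∑' f : Fin n → α, ∏ i, x (f i) = (∑' a, x a) ^ n := by
  induction n with
  | zero => simp
  | succ n ih =>
    rw [← (Fin.consEquiv fun _ : Fin (n + 1) => α).tsum_eq, ENNReal.tsum_prod']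
    simp only [Fin.consEquiv_apply, Fin.prod_univ_succ, Fin.cons_zero, Fin.cons_succ,
      ENNReal.tsum_mul_left, ih, ENNReal.tsum_mul_right, pow_succ']

theorem tsum_pi_prod_apply [Fintype ι] (x : α → ℝ≥0∞) :
    ∑' f : ι → α, ∏ i, x (f i) = (∑' a, x a) ^ Fintype.card ι := by
  let e := Fintype.equivFin ι
  rw [← tsum_fin_prod_apply, ← (e.arrowCongr (Equiv.refl α)).tsum_eq]
  refine tsum_congr fun f => ?_
  rw [← e.prod_comp]
  simp

theorem tsum_list_prod_map (x : α → ℝ≥0∞) :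
    ∑' L : List α, (L.map x).prod = ∑' n : ℕ, (∑' a, x a) ^ n := by
  rw [← List.equivSigmaTuple.symm.tsum_eq, ENNReal.tsum_sigma']
  refine tsum_congr fun n => ?_
  rw [← tsum_fin_prod_apply]
  refine tsum_congr fun f => ?_
  simp [List.equivSigmaTuple, List.map_ofFn, List.prod_ofFn]

theorem tsum_pow_natAbs_lt_top (hq : q < 1) : ∑' k : ℤ, q ^ k.natAbs < ∞ := by
  have hgeom : ∑' n : ℕ, q ^ n < ∞ := by
    rw [ENNReal.tsum_geometric]
    simpa using tsub_pos_of_lt hq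
  rw [tsum_of_nat_of_neg_add_one ENNReal.summable ENNReal.summable]
  refine ENNReal.add_lt_top.2 ⟨by simpa using hgeom, hgeom.trans_le' ?_⟩
  exact ENNReal.tsum_le_tsum fun n => pow_le_pow_right_of_le_one' hq.le (by omega)

theorem tsum_pow_latticeLength_lt_top [Fintype ι] (hq : q < 1) :
    ∑' z : ι → Multiplicative ℤ, q ^ latticeLength z < ∞ := by
  have h (z : ι → Multiplicative ℤ) :
      q ^ latticeLength z = ∏ i, q ^ (z i).toAdd.natAbs := (Finset.prod_pow_eq_pow_sum ..).symm
  simp_rw [h, tsum_pi_prod_apply fun k : Multiplicative ℤ => q ^ k.toAdd.natAbs]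
  exact ENNReal.pow_lt_top (tsum_pow_natAbs_lt_top hq)

theorem Word.tsum_pow_cost (q : ℝ≥0∞) (c : ℕ) (f : Letter ι → ℕ) :
    ∑' w : Word ι, q ^ w.cost c f = (∑' b, q ^ f b) * (1 - q ^ c * ∑' b, q ^ f b)⁻¹ := by
  have hpow (w : Word ι) :
      q ^ w.cost c f = q ^ f w.1 * (w.2.map fun b => q ^ c * q ^ f b).prod := by
    obtain ⟨b, L⟩ := w
    simp only [cost, pow_add]
    congr 1
    induction L with
    | nil => simp
    | cons b' L ih =>
      rw [List.map_cons, List.sum_cons, List.map_cons, List.prod_cons, pow_add, pow_add, ih]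
  simp_rw [hpow]
  rw [ENNReal.tsum_prod']
  simp_rw [ENNReal.tsum_mul_left, ENNReal.tsum_mul_right, tsum_list_prod_map,
    ENNReal.tsum_mul_left, ENNReal.tsum_geometric]

theorem Word.exists_tsum_pow_length_lt_top [Fintype ι] (hq : q < 1) :
    ∃ p, ∑' w : Word ι, q ^ length p w < ∞ := by
  let K : ℝ≥0∞ := ∑' b : Letter ι, q ^ latticeLength b.2
  have hK : K < ∞ := by
    simp only [K, ENNReal.tsum_prod', tsum_fintype]
    exact ENNReal.sum_lt_top.2 fun v _ => tsum_pow_latticeLength_lt_top hq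
  obtain ⟨p, hp⟩ : ∃ p : ℕ, q ^ p * K < 1 := by
    have htends : Filter.Tendsto (fun p : ℕ => q ^ p * K) .atTop (nhds (0 * K)) :=
      ENNReal.Tendsto.mul_const (ENNReal.tendsto_pow_atTop_nhds_zero_of_lt_one hq) (.inr hK.ne)
    exact (htends.eventually_lt_const (by simp)).exists
  refine ⟨p, ?_⟩
  have hle : ∑' b : Letter ι, q ^ (p * b.weight + latticeLength b.2) ≤ K :=
    ENNReal.tsum_le_tsum fun b => pow_le_pow_right_of_le_one' hq.le (Nat.le_add_left _ _)
  simp_rw [length_eq_cost, tsum_pow_cost]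
  refine ENNReal.mul_lt_top (hle.trans_lt hK) ?_
  rw [ENNReal.inv_lt_top, tsub_pos_iff_lt]
  calc _ ≤ q ^ p * K :=
        mul_le_mul' (pow_le_pow_right_of_le_one' hq.le (by omega)) hle
    _ < 1 := hp

theorem Portrait.tsum_pow_total_lt_top {F : Word ι → ℕ} (hF : ∑' w, q ^ F w < ∞) (m : ℕ) :
    ∑' P : Portrait ι m, q ^ total F m P < ∞ := by
  induction m with
  | zero => exact hF
  | succ m ih =>
    change ∑' P : ℤˣ × Portrait ι m × Portrait ι m, q ^ (total F m P.2.1 + total F m P.2.2) < ∞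
    simp only [pow_add, ENNReal.tsum_prod', tsum_fintype, ENNReal.tsum_mul_left,
      ENNReal.tsum_mul_right]
    exact ENNReal.sum_lt_top.2 fun _ _ => ENNReal.mul_lt_top ih ih

theorem exists_card_setOf_le_le_mul_pow {F : α → ℕ} {r : ℝ≥0} (hr : 1 < r)
    (hF : ∑' a, (r : ℝ≥0∞)⁻¹ ^ F a < ∞) :
    ∃ Z : ℝ≥0, ∀ n : ℕ, Finite {a // F a ≤ n} ∧ (Nat.card {a // F a ≤ n} : ℝ≥0) ≤ Z * r ^ n := by
  lift ∑' a, (r : ℝ≥0∞)⁻¹ ^ F a to ℝ≥0 using hF.ne with Z hZ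
  refine ⟨Z, fun n => ?_⟩
  have hq : (r : ℝ≥0∞)⁻¹ ≤ 1 := ENNReal.inv_le_one.2 (by exact_mod_cast hr.le)
  have hpos : ((r : ℝ≥0∞)⁻¹ ^ n) ≠ 0 := pow_ne_zero _ (by simp)
  obtain ⟨hfin, hcard⟩ := ENNReal.finset_card_const_le_le_of_tsum_le ENNReal.coe_ne_top hZ.ge hpos
  have hsub : {a | F a ≤ n} ⊆ {a | (r : ℝ≥0∞)⁻¹ ^ n ≤ (r : ℝ≥0∞)⁻¹ ^ F a} :=
    fun a ha => pow_le_pow_right_of_le_one' hq ha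
  refine ⟨hfin.subset hsub, ENNReal.coe_le_coe.1 ?_⟩
  calc ((Nat.card {a // F a ≤ n} : ℝ≥0) : ℝ≥0∞) = Nat.card {a | F a ≤ n} := by simp; rfl
    _ ≤ Nat.card {a | (r : ℝ≥0∞)⁻¹ ^ n ≤ (r : ℝ≥0∞)⁻¹ ^ F a} := by
        exact_mod_cast Nat.card_mono hfin hsub
    _ ≤ Z / (r : ℝ≥0∞)⁻¹ ^ n := by rwa [Nat.card_eq_card_finite_toFinset hfin]
    _ = ((Z * r ^ n : ℝ≥0) : ℝ≥0∞) := by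
        rw [← ENNReal.inv_pow, div_eq_mul_inv, inv_inv, ENNReal.coe_mul, ENNReal.coe_pow]

end GeneratingFunctions

section Generators

namespace PreGrigorchuk

variable {κ : Type*} [DecidableEq κ]

/-- The standard generators of the pre-Grigorchuk group. -/
def generators (κ : Type*) [DecidableEq κ] : Set (PreGrigorchuk κ) :=
  {rootFlip} ∪ (Set.range fun v : Klein => letter (v, 1)) ∪
    Set.range fun i : κ => latticeHom (Pi.mulSingle i (.ofAdd 1))

theorem rootFlip_mem_generators : rootFlip ∈ generators κ := .inl (.inl rfl)

theorem letter_klein_mem_generators (v : Klein) : letter (v, 1) ∈ generators κ :=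
  .inl (.inr ⟨v, rfl⟩)

theorem latticeHom_mulSingle_mem_generators (i : κ) :
    latticeHom (Pi.mulSingle i (.ofAdd 1)) ∈ generators κ := .inr ⟨i, rfl⟩

theorem finite_generators [Finite κ] : (generators κ).Finite :=
  ((Set.finite_singleton _).union (Set.finite_range _)).union (Set.finite_range _)

theorem closure_generators [Finite κ] : Subgroup.closure (generators κ) = ⊤ := by
  have hlattice (z : κ → Multiplicative ℤ) :
      latticeHom z ∈ Subgroup.closure (generators κ) := by
    suffices z ∈ (Subgroup.closure (generators κ)).comap latticeHom from this
    refine Subgroup.pi_mem_of_mulSingle_mem z fun i => ?_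
    have hz : (Pi.mulSingle i (z i) : κ → Multiplicative ℤ) =
        Pi.mulSingle i (.ofAdd 1) ^ (z i).toAdd := by
      rw [← Pi.mulSingle_zpow, ← ofAdd_zsmul, smul_eq_mul, mul_one, ofAdd_toAdd]
    rw [hz]
    exact zpow_mem (K := Subgroup.comap _ _)
      (Subgroup.subset_closure (latticeHom_mulSingle_mem_generators i)) _
  rw [eq_top_iff, ← Monoid.Coprod.closure_range_inl_union_inr, Subgroup.closure_le]
  rintro _ (⟨x, rfl⟩ | ⟨⟨v, z⟩, rfl⟩)
  · obtain rfl | rfl := Int.units_eq_one_or x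
    · exact (map_one flipHom : (flipHom 1 : PreGrigorchuk κ) = 1) ▸ one_mem _
    · exact Subgroup.subset_closure rootFlip_mem_generators
  · change letter (v, z) ∈ _
    rw [← Prod.fst_mul_snd (v, z), map_mul]
    exact mul_mem (Subgroup.subset_closure (letter_klein_mem_generators v)) (hlattice z)

variable [Fintype κ]

theorem eq_rootFlip_or_eq_letter_of_mem_generators {g : PreGrigorchuk κ}
    (hg : g ∈ generators κ ∨ g⁻¹ ∈ generators κ) :
    g = rootFlip ∨ ∃ b, latticeLength b.2 ≤ 1 ∧ g = letter b := by
  have h : ∀ g ∈ generators κ, g = rootFlip ∨ ∃ b, latticeLength b.2 ≤ 1 ∧ g = letter b := by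
    rintro _ ((rfl | ⟨v, rfl⟩) | ⟨i, rfl⟩)
    · exact .inl rfl
    · exact .inr ⟨_, by simp [latticeLength_one], rfl⟩
    · exact .inr ⟨_, by simp [latticeLength_mulSingle], rfl⟩
  refine hg.elim (h g) fun hg => ?_
  obtain hg | ⟨b, hb, hg⟩ := h _ hg
  · exact .inl (by rw [← inv_inv g, hg, rootFlip_inv])
  · exact .inr ⟨b⁻¹, by rwa [Prod.snd_inv, latticeLength_inv], by rw [map_inv, ← hg, inv_inv]⟩

theorem wordBall_generators_induction {P : ℕ → PreGrigorchuk κ → Prop} (one : ∀ n, P n 1)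
    (rootFlip_mul : ∀ n γ, P n γ → P (n + 1) (rootFlip * γ))
    (letter_mul : ∀ n b γ, latticeLength b.2 ≤ 1 → P n γ → P (n + 1) (letter b * γ))
    {n : ℕ} {γ : PreGrigorchuk κ} (hγ : γ ∈ wordBall (generators κ) n) : P n γ := by
  obtain ⟨l, hl, hlen, rfl⟩ := hγ
  induction l generalizing n with
  | nil => exact one n
  | cons g l ih =>
    obtain ⟨n, rfl⟩ : ∃ m, n = m + 1 :=
      Nat.exists_eq_add_one.2 (Nat.zero_lt_of_lt (Nat.lt_of_succ_le hlen))
    rw [List.forall_mem_cons] at hl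
    have hprod := ih hl.2 (Nat.le_of_succ_le_succ hlen)
    rw [List.prod_cons]
    obtain rfl | ⟨b, hb, rfl⟩ := eq_rootFlip_or_eq_letter_of_mem_generators hl.1
    exacts [rootFlip_mul _ _ hprod, letter_mul _ _ _ hb hprod]

theorem exists_word_length_le {n : ℕ} {γ : PreGrigorchuk κ} (hγ : γ ∈ wordBall (generators κ) n) :
    ∃ w : Word κ, w.eval = γ ∧ w.length 1 ≤ 19 * n := by
  refine wordBall_generators_induction
    (P := fun n γ => ∃ w : Word κ, w.eval = γ ∧ w.length 1 ≤ 19 * n)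
    (fun n => ⟨.nil, Word.eval_nil, ?_⟩) ?_ ?_ hγ
  · simp [Word.length, Word.cost, Word.nil, latticeLength_one]
  · rintro n _ ⟨w, rfl, hw⟩
    refine ⟨w.flipMul (-1), Word.eval_flipMul _ _, ?_⟩
    have h₁ := Word.cost_flipMul_le (c := 8) Letter.weight_one (-1) w
    have h₂ := Word.cost_flipMul_le (c := 0) (f := fun b : Letter κ => latticeLength b.2)
      latticeLength_one (-1) w
    simp only [Word.length, reduceIte, show (-1 : ℤˣ) ≠ 1 by decide] at h₁ h₂ hw ⊢
    omega
  · rintro n b _ hb ⟨w, rfl, hw⟩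
    refine ⟨w.letterMul b, Word.eval_letterMul _ _, ?_⟩
    have h₁ := Word.cost_letterMul_le (c := 8) Letter.weight_mul_le b w
    have h₂ := Word.cost_letterMul_le (c := 0) (f := fun b : Letter κ => latticeLength b.2)
      (fun b b' => latticeLength_mul_le b.2 b'.2) b w
    have hweight := b.weight_le
    simp only [Word.length] at hw ⊢
    omega

end PreGrigorchuk

end Generators

section Growth

open scoped ENNReal NNReal

open PreGrigorchuk

theorem subexpGrowth_image_generators.{u} {κ W : Type*} [Finite κ] [DecidableEq κ] [Group W]
    (π : PreGrigorchuk κ →* W)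
    (hπ : ∀ m, ∃ (E : Type u) (_ : Finite E) (e : W → E), ∀ w w' : Word κ,
      w.portrait m = w'.portrait m → e (π w.eval) = e (π w'.eval) → π w.eval = π w'.eval) :
    SubexpGrowth (π '' generators κ) := by
  cases nonempty_fintype κ
  refine subexpGrowth_of_forall_card_le (c := 19) fun r hr => ?_
  lift r to ℝ≥0 using zero_le_one.trans hr.le
  obtain ⟨p, hp⟩ := Word.exists_tsum_pow_length_lt_top (ι := κ) (q := (r : ℝ≥0∞)⁻¹)
    (ENNReal.inv_lt_one.2 (by exact_mod_cast hr))
  obtain ⟨m, C, hC⟩ := Word.exists_total_length_portrait_le (κ := κ) p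
  obtain ⟨Z, hZ⟩ := exists_card_setOf_le_le_mul_pow (by exact_mod_cast hr)
    (Portrait.tsum_pow_total_lt_top hp m)
  obtain ⟨E, _, e, he⟩ := hπ m
  refine ⟨Z * r ^ C * Nat.card E, fun n => ?_⟩
  have hword (g : wordBall (π '' generators κ) n) :
      ∃ w : Word κ, π w.eval = g ∧ w.length 1 ≤ 19 * n := by
    obtain ⟨γ, hγ, hg⟩ := (image_wordBall π _ n).ge g.2
    obtain ⟨w, rfl, hw⟩ := exists_word_length_le hγ
    exact ⟨w, hg, hw⟩
  choose w hw hlen using hword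
  let code (g : wordBall (π '' generators κ) n) :
      {P : Portrait κ m // P.total (Word.length p) m ≤ 19 * n + C} × E :=
    (⟨(w g).portrait m, (hC _).trans (Nat.add_le_add_right (hlen g) C)⟩, e g)
  have hcode : Function.Injective code := by
    intro g g' h
    obtain ⟨h₁, h₂⟩ := Prod.mk.inj h
    refine Subtype.ext ?_
    rw [← hw g, ← hw g']
    exact he _ _ (congrArg Subtype.val h₁) (by rwa [hw, hw])
  obtain ⟨_, hcard⟩ := hZ (19 * n + C)
  calc (Nat.card (wordBall (π '' generators κ) n) : ℝ)
      ≤ Nat.card {P : Portrait κ m // P.total (Word.length p) m ≤ 19 * n + C} * Nat.card E := by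
        exact_mod_cast (Nat.card_le_card_of_injective code hcode).trans_eq (Nat.card_prod _ _)
    _ ≤ Z * r ^ (19 * n + C) * Nat.card E := by gcongr; exact_mod_cast hcard
    _ = Z * r ^ C * Nat.card E * r ^ (19 * n) := by ring

end Growth

section Conjugators

namespace PreGrigorchuk

variable {κ G : Type*} [Group G]

/-- The letter used in the `k`-th step of the construction of `conjugator`. -/
def conjugatorLetter : ℕ → Klein
  | 0 => (-1, 1)
  | k + 1 => Klein.shift.symm (conjugatorLetter k)

/-- Elements of the Grigorchuk group such that `conjugator (k + 1)` fixes the two coordinates and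
has section `conjugator k` at the coordinate `-1`. -/
def conjugator : ℕ → PreGrigorchuk κ
  | 0 => rootFlip
  | k + 1 => conjugator k * letter (conjugatorLetter k, 1) * conjugator k

theorem exists_liftRep_conjugator_succ (ρ : PreGrigorchuk κ →* G) (k : ℕ) :
    ∃ f, f (-1) = ρ (conjugator k) ∧ liftRep ρ (conjugator (k + 1)) = wreathBase f := by
  induction k with
  | zero =>
    refine ⟨fun q => if -q = 1 then ρ rootFlip else ρ (letter (Klein.shift (-1, 1), 1)), rfl, ?_⟩
    simp only [conjugator, conjugatorLetter, map_mul, liftRep_letter, rootFlip, liftRep_flipHom]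
    ext q <;> simp [Letter.shift]
  | succ k ih =>
    obtain ⟨f, hf, hconj⟩ := ih
    let b : Letter κ := (conjugatorLetter (k + 1), 1)
    refine ⟨f * (fun q => if q = 1 then ρ (flipHom b.1.1) else ρ (letter b.shift)) * f, ?_, ?_⟩
    · simp [b, hf, conjugator, conjugatorLetter, Letter.shift]
    · rw [conjugator, map_mul, map_mul, hconj, liftRep_letter, ← map_mul, ← map_mul]

/-- The inclusion of the free abelian group conjugated by `conjugator k`. -/
def deepHom (k : ℕ) : (κ → Multiplicative ℤ) →* PreGrigorchuk κ :=
  (MulAut.conj (conjugator k)).toMonoidHom.comp latticeHom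

theorem deepHom_apply (k : ℕ) (z : κ → Multiplicative ℤ) :
    deepHom k z = conjugator k * latticeHom z * (conjugator k)⁻¹ := rfl

theorem liftRep_deepHom_succ (ρ : PreGrigorchuk κ →* G) (k : ℕ) (z : κ → Multiplicative ℤ) :
    liftRep ρ (deepHom (k + 1) z) = wreathSingle (-1) (ρ (deepHom k z)) := by
  obtain ⟨f, hf, hconj⟩ := exists_liftRep_conjugator_succ ρ k
  simp only [deepHom_apply, map_mul, map_inv, hconj, liftRep_latticeHom,
    wreathBase_conj_wreathSingle, hf]

theorem iterLift_latticeHom (ρ : PreGrigorchuk κ →* G) (z : κ → Multiplicative ℤ) :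
    ∀ n, iterLift ρ n (latticeHom z) = iterSingle n (ρ (latticeHom z))
  | 0 => rfl
  | n + 1 => (liftRep_latticeHom _ z).trans (congrArg _ (iterLift_latticeHom ρ z n))

theorem iterLift_deepHom (ρ : PreGrigorchuk κ →* G) (z : κ → Multiplicative ℤ) :
    ∀ n, iterLift ρ n (deepHom n z) = iterSingle n (ρ (deepHom 0 z))
  | 0 => rfl
  | n + 1 => (liftRep_deepHom_succ _ n z).trans (congrArg _ (iterLift_deepHom ρ z n))

theorem commute_liftRep_deepHom_zero (ρ : PreGrigorchuk κ →* G) (z z' : κ → Multiplicative ℤ) :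
    Commute (liftRep ρ (deepHom 0 z)) (liftRep ρ (latticeHom z')) := by
  rw [deepHom_apply, map_mul, map_mul, map_inv, conjugator, rootFlip, liftRep_flipHom,
    liftRep_latticeHom, liftRep_latticeHom, inl_conj_wreathSingle]
  exact commute_wreathSingle (by decide) _ _

theorem commute_iterLift_deepHom (ρ : PreGrigorchuk κ →* G) (z z' : κ → Multiplicative ℤ) :
    ∀ {k n}, k < n → Commute (iterLift ρ n (deepHom k z)) (iterLift ρ n (latticeHom z'))
  | 0, _ + 1, _ => commute_liftRep_deepHom_zero _ z z'
  | k + 1, n + 1, h => by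
    have ih := (commute_iterLift_deepHom ρ z z' (Nat.lt_of_succ_lt_succ h)).map
      (wreathSingle (-1 : ℤˣ))
    rwa [← liftRep_deepHom_succ, ← liftRep_latticeHom] at ih

end PreGrigorchuk

end Conjugators

theorem extend_mulSingle {α β M : Type*} [DecidableEq α] [DecidableEq β] [One M] {f : α → β}
    (hf : Function.Injective f) (a : α) (x : M) :
    Function.extend f (Pi.mulSingle a x) 1 = Pi.mulSingle (f a) x := by
  ext b
  by_cases hb : ∃ a', f a' = b
  · obtain ⟨a', rfl⟩ := hb
    simp [hf.extend_apply, Pi.mulSingle_apply, hf.eq_iff]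
  · rw [Function.extend_apply' _ _ _ hb, Pi.mulSingle_eq_of_ne (fun h => hb ⟨a, h.symm⟩),
      Pi.one_apply]

section LevelRepresentations

open PreGrigorchuk

/-- A finite quotient of the free abelian group on `ι`, the exponent doubling with the level `s`. -/
abbrev Torus (ι : Type*) (s : ℕ) : Type _ := ι → Multiplicative (ZMod (2 ^ (s + 1)))

variable {ι H : Type*} [Group H]

theorem two_pow_zmod_ne_zero (s : ℕ) : (2 ^ s : ZMod (2 ^ (s + 1))) ≠ 0 := by
  have h : ¬ 2 ^ (s + 1) ∣ 2 ^ s := Nat.pow_dvd_pow_iff_le_right'.not.2 (by omega)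
  exact_mod_cast (ZMod.natCast_eq_zero_iff (2 ^ s) (2 ^ (s + 1))).not.2 h

theorem two_pow_succ_zmod_eq_zero (s : ℕ) : (2 ^ (s + 1) : ZMod (2 ^ (s + 1))) = 0 := by
  exact_mod_cast ZMod.natCast_self (2 ^ (s + 1))

/-- The element of order two in the `t`-th direction of the torus. -/
def antipode [DecidableEq ι] (s : ℕ) (t : ι) : Torus ι s := Pi.mulSingle t (.ofAdd (2 ^ s))

theorem antipode_mul_self [DecidableEq ι] (s : ℕ) (t : ι) : antipode s t * antipode s t = 1 := by
  rw [antipode, ← Pi.mulSingle_mul, ← ofAdd_add, ← two_mul, ← pow_succ', two_pow_succ_zmod_eq_zero,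
    ofAdd_zero, Pi.mulSingle_one]

theorem antipode_injective [DecidableEq ι] (s : ℕ) :
    Function.Injective (antipode s : ι → Torus ι s) := by
  intro t t' h
  by_contra hne
  have ht := congrFun h t
  rw [antipode, antipode, Pi.mulSingle_eq_same, Pi.mulSingle_eq_of_ne hne] at ht
  exact two_pow_zmod_ne_zero s ht

/-- The reduction of the first half of a lattice vector to the torus. -/
def torusProj (ι : Type*) (s : ℕ) : (ι ⊕ ι → Multiplicative ℤ) →* Torus ι s :=
  MonoidHom.pi fun t =>
    (AddMonoidHom.toMultiplicative (Int.castAddHom _)).comp (Pi.evalMonoidHom _ (.inl t))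

theorem torusProj_mulSingle_inl [DecidableEq ι] (s : ℕ) (t : ι) (n : ℤ) :
    torusProj ι s (Pi.mulSingle (.inl t) (.ofAdd n)) = Pi.mulSingle t (.ofAdd (n : ZMod _)) := by
  ext t'
  obtain rfl | h := eq_or_ne t' t
  · simp [torusProj]
  · simp [torusProj, h]

theorem torusProj_mulSingle_inr [DecidableEq ι] (s : ℕ) (t : ι) (n : ℤ) :
    torusProj ι s (Pi.mulSingle (.inr t) (.ofAdd n)) = 1 := by
  ext
  simp [torusProj]

/-- The evaluation of the second half of a lattice vector on the elements `θ t`. -/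
def lampProj (θ : ι → H) : (ι ⊕ ι → Multiplicative ℤ) →* (ι → H) :=
  MonoidHom.pi fun t => (zpowersHom H (θ t)).comp (Pi.evalMonoidHom _ (.inr t))

theorem lampProj_apply (θ : ι → H) (z : ι ⊕ ι → Multiplicative ℤ) (t : ι) :
    lampProj θ z t = θ t ^ (z (.inr t)).toAdd := rfl

theorem lampProj_mulSingle_inl [DecidableEq ι] (θ : ι → H) (t : ι) (n : ℤ) :
    lampProj θ (Pi.mulSingle (.inl t) (.ofAdd n)) = 1 := by
  ext
  simp [lampProj_apply]

theorem lampProj_mulSingle_inr [DecidableEq ι] (θ : ι → H) (t : ι) (n : ℤ) :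
    lampProj θ (Pi.mulSingle (.inr t) (.ofAdd n)) = Pi.mulSingle t (θ t ^ n) := by
  ext t'
  obtain rfl | h := eq_or_ne t' t
  · simp [lampProj_apply]
  · simp [lampProj_apply, h]

/-- The representation of letters by translations of the torus. -/
def translationRep (H ι : Type*) [Group H] (s : ℕ) : Letter (ι ⊕ ι) →* H ≀ᵣ Torus ι s :=
  RegularWreathProduct.inl.comp ((torusProj ι s).comp (MonoidHom.snd _ _))

theorem translationRep_apply (s : ℕ) (b : Letter (ι ⊕ ι)) :
    translationRep H ι s b = .inl (torusProj ι s b.2) := rfl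

variable [DecidableEq ι]

/-- The representation of letters by lamp configurations supported on the antipodes. -/
noncomputable def lampRep (θ : ι → H) (s : ℕ) : Letter (ι ⊕ ι) →* H ≀ᵣ Torus ι s :=
  wreathBase.comp
    ((Function.ExtendByOne.hom H (antipode s)).comp ((lampProj θ).comp (MonoidHom.snd _ _)))

theorem lampRep_apply (θ : ι → H) (s : ℕ) (b : Letter (ι ⊕ ι)) :
    lampRep θ s b = wreathBase (Function.extend (antipode s) (lampProj θ b.2) 1) := rfl

/-- The representation from which the representation of level `s` is obtained by iterated
lifting. -/
noncomputable def baseRep (θ : ι → H) (s : ℕ) : PreGrigorchuk (ι ⊕ ι) →* (H ≀ᵣ Torus ι s) ≀ᵣ ℤˣ :=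
  wreathRep (translationRep H ι s) (lampRep θ s)

theorem baseRep_latticeHom_mulSingle_inl (θ : ι → H) (s : ℕ) (t : ι) (n : ℤ) :
    baseRep θ s (latticeHom (Pi.mulSingle (.inl t) (.ofAdd n))) =
      wreathSingle 1 (.inl (Pi.mulSingle t (.ofAdd (n : ZMod _)))) := by
  rw [← torusProj_mulSingle_inl]
  refine wreathRep_letter_of_right_eq_one ?_
  rw [lampRep_apply, MonoidHom.inr_apply, lampProj_mulSingle_inl, Function.extend_one, map_one]

theorem baseRep_latticeHom_mulSingle_inr [Fintype ι] (θ : ι → H) (s : ℕ) (t : ι) (n : ℤ) :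
    baseRep θ s (latticeHom (Pi.mulSingle (.inr t) (.ofAdd n))) =
      wreathSingle (-1) (wreathSingle (antipode s t) (θ t ^ n)) := by
  rw [wreathSingle_apply (antipode s t), ← extend_mulSingle (antipode_injective s),
    ← lampProj_mulSingle_inr]
  refine wreathRep_letter_of_left_eq_one ?_
  rw [translationRep_apply, MonoidHom.inr_apply, torusProj_mulSingle_inr, map_one]

/-- The target of the representation of level `s`. -/
abbrev LevelGroup (H ι : Type*) [Group H] (s : ℕ) : Type _ :=
  IterWreath ((H ≀ᵣ Torus ι s) ≀ᵣ ℤˣ) s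

/-- The representation of level `s`: the wreath product of `H` and the torus sits at depth `s + 1`
of the binary tree. -/
noncomputable def levelRep (θ : ι → H) (s : ℕ) : PreGrigorchuk (ι ⊕ ι) →* LevelGroup H ι s :=
  iterLift (baseRep θ s) s

end LevelRepresentations

section Ambient

open PreGrigorchuk

variable {ι : Type*} [DecidableEq ι] {H : ℕ → Type*} [∀ s, Group (H s)] (θ : ∀ s, ι → H s)

/-- The product of the representations of all levels and of the projection to the lattice. -/
noncomputable def totalRep : PreGrigorchuk (ι ⊕ ι) →*
    (∀ s, LevelGroup (H s) ι s) × (ι ⊕ ι → Multiplicative ℤ) :=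
  (MonoidHom.pi fun s => levelRep (θ s) s).prod latticeProj

theorem totalRep_apply (γ : PreGrigorchuk (ι ⊕ ι)) :
    totalRep θ γ = (fun s => levelRep (θ s) s γ, latticeProj γ) := rfl

theorem closure_rangeRestrict_image_generators [Finite ι] :
    Subgroup.closure ((totalRep θ).rangeRestrict '' generators (ι ⊕ ι)) = ⊤ := by
  rw [← MonoidHom.map_closure, closure_generators, ← MonoidHom.range_eq_map,
    MonoidHom.range_eq_top.2 (totalRep θ).rangeRestrict_surjective]

theorem subexpGrowth_rangeRestrict_image_generators [Finite ι] [∀ s, Finite (H s)] :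
    SubexpGrowth ((totalRep θ).rangeRestrict '' generators (ι ⊕ ι)) := by
  cases nonempty_fintype ι
  refine subexpGrowth_image_generators _ fun m => ?_
  refine ⟨∀ s : Fin m, LevelGroup (H s) ι s, inferInstance,
    fun g s => g.1.1 s, fun w w' hport hlow => Subtype.ext (Prod.ext (funext fun s => ?_) ?_)⟩
  · obtain hs | hs := lt_or_ge s m
    · exact congrFun hlow ⟨s, hs⟩
    · exact Word.iterLift_eval_eq_of_portrait_eq _ hs hport
  · exact Word.latticeProj_eval_eq_of_portrait_eq hport

end Ambient

section Embedding

open PreGrigorchuk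

theorem map_eq_one_of_mem_commutator {G A : Type*} [Group G] [CommGroup A] (f : G →* A) {g : G}
    (hg : g ∈ commutator G) : f g = 1 :=
  Abelianization.commutator_subset_ker f hg

variable {ι H : Type*} [DecidableEq ι] [Group H]

/-- The inclusion of `H` as a single coordinate of the target of the representation of level
`s`. -/
def lampEmbedding (H ι : Type*) [Group H] [Fintype ι] [DecidableEq ι] (s : ℕ) :
    H →* LevelGroup H ι s :=
  (iterSingle s).comp ((wreathSingle (-1)).comp (wreathSingle 1))

theorem lampEmbedding_injective [Fintype ι] (s : ℕ) :
    Function.Injective (lampEmbedding H ι s) :=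
  (iterSingle_injective s).comp ((wreathSingle_injective _).comp (wreathSingle_injective _))

/-- Moves the lamps of level `s` in direction `t` from the antipode to the origin. -/
def lampShift (s : ℕ) (t : ι) : PreGrigorchuk (ι ⊕ ι) :=
  deepHom s (Pi.mulSingle (.inl t) (.ofAdd (2 ^ s)))

/-- Lights the lamp `θ t` at the antipode in direction `t`, in all levels at once. -/
def lampSwitch (t : ι) : PreGrigorchuk (ι ⊕ ι) := latticeHom (Pi.mulSingle (.inr t) (.ofAdd 1))

theorem levelRep_lampSwitch [Fintype ι] (θ : ι → H) (s : ℕ) (t : ι) :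
    levelRep θ s (lampSwitch t) =
      iterSingle s (wreathSingle (-1) (wreathSingle (antipode s t) (θ t))) := by
  rw [lampSwitch, levelRep, iterLift_latticeHom, baseRep_latticeHom_mulSingle_inr, zpow_one]

theorem levelRep_lampShift_self (θ : ι → H) (s : ℕ) (t : ι) :
    levelRep θ s (lampShift s t) = iterSingle s (wreathSingle (-1) (.inl (antipode s t))) := by
  have hflip : baseRep θ s (conjugator 0) = .inl (-1) := wreathRep_flipHom _ _ _
  rw [lampShift, levelRep, iterLift_deepHom, deepHom_apply]
  congr 1
  rw [map_mul, map_mul, map_inv, baseRep_latticeHom_mulSingle_inl, hflip, inl_conj_wreathSingle,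
    mul_one, Int.cast_pow, Int.cast_ofNat, antipode]

theorem levelRep_lampShift_of_lt (θ : ι → H) {s j : ℕ} (h : j < s) (t : ι) :
    levelRep θ j (lampShift s t) = 1 := by
  obtain ⟨k, rfl⟩ := Nat.exists_eq_add_of_lt h
  have hpow : ((2 ^ (j + k + 1) : ℤ) : ZMod (2 ^ (j + 1))) = 0 := by
    rw [Int.cast_pow, Int.cast_ofNat, add_right_comm, pow_add (2 : ZMod _),
      two_pow_succ_zmod_eq_zero, zero_mul]
  rw [lampShift, deepHom_apply, map_mul, map_mul, map_inv, levelRep, iterLift_latticeHom,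
    baseRep_latticeHom_mulSingle_inl, hpow, ofAdd_zero, Pi.mulSingle_one, map_one, map_one, map_one,
    mul_one, mul_inv_cancel]

theorem commute_levelRep_lampShift_lampSwitch (θ : ι → H) {s j : ℕ} (h : s ≠ j) (t t' : ι) :
    Commute (levelRep θ j (lampShift s t)) (levelRep θ j (lampSwitch t')) := by
  obtain h | h := h.lt_or_gt
  · exact commute_iterLift_deepHom _ _ _ h
  · rw [levelRep_lampShift_of_lt θ h]
    exact Commute.one_left _

/-- Words of level `s` in the free group, with `t` lighting the lamp `θ t` at the origin of the
level `s`. -/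
def levelWord (s : ℕ) : FreeGroup ι →* PreGrigorchuk (ι ⊕ ι) :=
  FreeGroup.lift fun t => lampShift s t * lampSwitch t * (lampShift s t)⁻¹

theorem levelWord_of (s : ℕ) (t : ι) :
    levelWord s (.of t) = lampShift s t * lampSwitch t * (lampShift s t)⁻¹ :=
  FreeGroup.lift_apply_of

theorem levelRep_levelWord_self [Fintype ι] (θ : ι → H) (s : ℕ) (w : FreeGroup ι) :
    levelRep θ s (levelWord s w) = lampEmbedding H ι s (FreeGroup.lift θ w) := by
  suffices (levelRep θ s).comp (levelWord s) = (lampEmbedding H ι s).comp (FreeGroup.lift θ) from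
    DFunLike.congr_fun this w
  ext t
  simp only [MonoidHom.comp_apply, levelWord_of, FreeGroup.lift_apply_of, map_mul, map_inv,
    levelRep_lampSwitch, levelRep_lampShift_self, lampEmbedding]
  rw [← map_inv, ← map_mul, ← map_mul, ← map_inv, ← map_mul, ← map_mul, inl_conj_wreathSingle,
    antipode_mul_self]

theorem map_levelWord_eq_one_of_commute {G : Type*} [Group G] (f : PreGrigorchuk (ι ⊕ ι) →* G)
    {s : ℕ} (hf : ∀ t, Commute (f (lampShift s t)) (f (lampSwitch t))) {w : FreeGroup ι}
    (hw : w ∈ commutator (FreeGroup ι)) : f (levelWord s w) = 1 := by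
  let z : ι → (ι ⊕ ι → Multiplicative ℤ) := fun t => Pi.mulSingle (.inr t) (.ofAdd 1)
  have hfactor : f.comp (levelWord s) = (f.comp latticeHom).comp (FreeGroup.lift z) := by
    ext t
    rw [MonoidHom.comp_apply, levelWord_of, map_mul, map_mul, map_inv, (hf t).eq,
      mul_inv_cancel_right, MonoidHom.comp_apply, FreeGroup.lift_apply_of]
    rfl
  have h := DFunLike.congr_fun hfactor w
  rwa [MonoidHom.comp_apply, MonoidHom.comp_apply, map_eq_one_of_mem_commutator _ hw, map_one] at h

theorem levelRep_levelWord_of_ne (θ : ι → H) {s j : ℕ} (h : s ≠ j) {w : FreeGroup ι}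
    (hw : w ∈ commutator (FreeGroup ι)) : levelRep θ j (levelWord s w) = 1 :=
  map_levelWord_eq_one_of_commute _
    (fun t => commute_levelRep_lampShift_lampSwitch θ h t t) hw

theorem conjugator_mem_wordBall {κ : Type*} [DecidableEq κ] (k : ℕ) :
    conjugator k ∈ wordBall (generators κ) (2 ^ (k + 1) - 1) := by
  induction k with
  | zero => exact mem_wordBall_one rootFlip_mem_generators
  | succ k ih =>
    refine wordBall_mono ?_ (mul_mem_wordBall
      (mul_mem_wordBall ih (mem_wordBall_one (letter_klein_mem_generators _))) ih)
    have := Nat.one_le_two_pow (n := k + 1)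
    rw [pow_succ 2 (k + 1)]
    omega

theorem levelWord_mem_wordBall (s : ℕ) (w : FreeGroup ι) :
    levelWord s w ∈ wordBall (generators (ι ⊕ ι)) (10 * 2 ^ s * w.norm) := by
  refine freeGroup_lift_mem_wordBall (fun t => ?_) w
  have hpow : latticeHom (Pi.mulSingle (.inl t) (.ofAdd (2 ^ s))) ∈
      wordBall (generators (ι ⊕ ι)) (2 ^ s * 1) := by
    have h : Multiplicative.ofAdd (2 ^ s : ℤ) = .ofAdd 1 ^ 2 ^ s := by
      rw [← ofAdd_nsmul, nsmul_one, Nat.cast_pow, Nat.cast_ofNat]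
    rw [h, Pi.mulSingle_pow, map_pow]
    exact pow_mem_wordBall (mem_wordBall_one (latticeHom_mulSingle_mem_generators _)) _
  refine wordBall_mono ?_ (conj_mem_wordBall (conj_mem_wordBall (conjugator_mem_wordBall s) hpow)
    (mem_wordBall_one (latticeHom_mulSingle_mem_generators _)))
  have := Nat.one_le_two_pow (n := s)
  rw [pow_succ]
  omega

end Embedding

section DerivedSubgroups

open PreGrigorchuk

variable {ι : Type*} [DecidableEq ι] [Fintype ι] {H : ℕ → Type*} [∀ s, Group (H s)]
  {θ : ∀ s, ι → H s}

/-- The inclusion of `H s` in the target of the total representation. -/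
def totalEmbedding (H : ℕ → Type*) [∀ s, Group (H s)] (ι : Type*) [DecidableEq ι] [Fintype ι]
    (s : ℕ) : H s →* (∀ s, LevelGroup (H s) ι s) × (ι ⊕ ι → Multiplicative ℤ) :=
  (MonoidHom.inl _ _).comp
    ((MonoidHom.mulSingle (fun s => LevelGroup (H s) ι s) s).comp (lampEmbedding (H s) ι s))

theorem totalEmbedding_apply (s : ℕ) (h : H s) :
    totalEmbedding H ι s h =
      (Pi.mulSingle (M := fun s => LevelGroup (H s) ι s) s (lampEmbedding (H s) ι s h), 1) := rfl

theorem totalEmbedding_injective (s : ℕ) : Function.Injective (totalEmbedding H ι s) :=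
  fun _ _ h => lampEmbedding_injective s
    (Pi.mulSingle_injective (M := fun s => LevelGroup (H s) ι s) s (congrArg Prod.fst h))

theorem totalRep_levelWord (s : ℕ) {w : FreeGroup ι} (hw : w ∈ commutator (FreeGroup ι)) :
    totalRep θ (levelWord s w) = totalEmbedding H ι s (FreeGroup.lift (θ s) w) := by
  rw [totalEmbedding_apply, totalRep_apply]
  refine congrArg₂ Prod.mk (funext fun j => ?_)
    (map_eq_one_of_mem_commutator (latticeProj.comp (levelWord s)) hw)
  obtain rfl | h := eq_or_ne s j
  · rw [Pi.mulSingle_eq_same, levelRep_levelWord_self]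
  · rw [Pi.mulSingle_eq_of_ne h.symm, levelRep_levelWord_of_ne (θ j) h hw]

variable (hθ : ∀ s, Subgroup.closure (Set.range (θ s)) = ⊤) (s : ℕ)

/-- The embedding of the derived subgroup of `H s` in the image of the total representation. -/
noncomputable def derivedEmbedding : commutator (H s) →* (totalRep θ).range :=
  ((totalEmbedding H ι s).comp (commutator (H s)).subtype).codRestrict _ fun h => by
    obtain ⟨w, hw, hlift, -⟩ := exists_balanced_norm_le_perfectNorm (hθ s) h.2
    exact ⟨levelWord s w, by rw [totalRep_levelWord s hw, hlift]; rfl⟩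

theorem derivedEmbedding_injective : Function.Injective (derivedEmbedding hθ s) :=
  fun _ _ h => Subtype.ext (totalEmbedding_injective s (congrArg Subtype.val h))

theorem wordNorm_derivedEmbedding_le (h : commutator (H s)) :
    wordNorm ((totalRep θ).rangeRestrict '' generators (ι ⊕ ι)) (derivedEmbedding hθ s h) ≤
      10 * 2 ^ s * perfectNorm (Set.range (θ s)) (h : H s) := by
  obtain ⟨w, hw, hlift, hnorm⟩ := exists_balanced_norm_le_perfectNorm (hθ s) h.2
  refine (wordNorm_le_of_mem_wordBall ?_).trans (Nat.mul_le_mul_left _ hnorm)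
  rw [← image_wordBall]
  refine ⟨levelWord s w, levelWord_mem_wordBall s w, Subtype.ext ?_⟩
  rw [MonoidHom.coe_rangeRestrict, totalRep_levelWord s hw, hlift]
  rfl

end DerivedSubgroups

section LetterCosts

open PreGrigorchuk

variable {κ G B : Type*} [Group G] [CommMonoid B]

/-- Each letter `b` is related by `R` to the cost of its lattice vector, and the flips are free. -/
structure HasLetterCost (R : Submonoid (G × B)) (ρ : PreGrigorchuk κ →* G)
    (c : (κ → Multiplicative ℤ) → B) : Prop where
  flip_mem : ∀ x, (ρ (flipHom x), 1) ∈ R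
  letter_mem : ∀ b : Letter κ, (ρ (letter b), c b.2) ∈ R

variable {R : Submonoid (G × B)} {c : (κ → Multiplicative ℤ) → B}

theorem HasLetterCost.wreathRep {f₀ f₁ : Letter κ →* G} (h₀ : ∀ b, (f₀ b, 1) ∈ R)
    (h₁ : ∀ b, (f₁ b, c b.2) ∈ R) : HasLetterCost (wreathRel ℤˣ R) (wreathRep f₀ f₁) c where
  flip_mem x := wreathRep_flipHom f₀ f₁ x ▸ inl_mem_wreathRel x
  letter_mem b := by
    rw [wreathRep_letter, mem_wreathRel]
    refine ⟨fun q => if q = 1 then 1 else c b.2, fun q => ?_, ?_⟩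
    · rw [wreathBase_left]
      dsimp only
      split_ifs
      exacts [h₀ b, h₁ b]
    · simp

theorem HasLetterCost.iterLift {ρ : PreGrigorchuk κ →* G} (h : HasLetterCost R ρ c) :
    ∀ n, HasLetterCost (iterRel R n) (iterLift ρ n) c
  | 0 => h
  | n + 1 => .wreathRep (fun b => (h.iterLift n).flip_mem b.1.1)
      (fun b => (h.iterLift n).letter_mem b.shift)

theorem HasLetterCost.exists_mem_of_mem_wordBall [Fintype κ] [DecidableEq κ] {A : Type*}
    [CommMonoid A] {R : Submonoid (G × (Multiplicative ℕ × A))} {ρ : PreGrigorchuk κ →* G}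
    {len : (κ → Multiplicative ℤ) → ℕ} {cls : (κ → Multiplicative ℤ) →* A}
    (h : HasLetterCost R ρ fun z => (.ofAdd (len z), cls z)) (hlen : ∀ z, len z ≤ latticeLength z)
    {n : ℕ} {γ : PreGrigorchuk κ} (hγ : γ ∈ wordBall (generators κ) n) :
    ∃ m ≤ n, (ρ γ, (.ofAdd m, cls (latticeProj γ))) ∈ R := by
  refine wordBall_generators_induction
    (P := fun n γ => ∃ m ≤ n, (ρ γ, (.ofAdd m, cls (latticeProj γ))) ∈ R)
    (fun n => ⟨0, n.zero_le, ?_⟩) ?_ ?_ hγ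
  · rw [map_one, map_one, map_one]
    exact R.one_mem
  · rintro n γ ⟨m, hm, hmem⟩
    refine ⟨m, hm.trans n.le_succ, ?_⟩
    simpa [rootFlip] using R.mul_mem (h.flip_mem (-1)) hmem
  · rintro n b γ hb ⟨m, hm, hmem⟩
    refine ⟨len b.2 + m, by have := (hlen b.2).trans hb; omega, ?_⟩
    simpa using R.mul_mem (h.letter_mem b) hmem

theorem wreathBase_extend_mem_wreathRel {ι Q : Type*} [Fintype ι] [Group Q] [Fintype Q] {e : ι → Q}
    (he : Function.Injective e) {f : ι → G} {c : ι → B} (h : ∀ t, (f t, c t) ∈ R) :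
    (wreathBase (Function.extend e f 1), ∏ t, c t) ∈ wreathRel Q R := by
  refine ⟨Function.extend e c 1, fun q => ?_, ?_⟩
  · by_cases hq : ∃ t, e t = q
    · obtain ⟨t, rfl⟩ := hq
      simpa [he.extend_apply] using h t
    · rw [wreathBase_left, Function.extend_apply' _ _ _ hq, Function.extend_apply' _ _ _ hq]
      exact R.one_mem
  · exact (Fintype.prod_of_injective e he c (Function.extend e c 1)
      (fun q hq => Function.extend_apply' c (1 : Q → B) q hq)
      fun t => (he.extend_apply c 1 t).symm).symm

end LetterCosts

section LowerBound

open PreGrigorchuk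

variable {ι H : Type*} [Group H]

/-- The number of lamps switched by a lattice vector. -/
def lampLength [Fintype ι] (z : ι ⊕ ι → Multiplicative ℤ) : ℕ := ∑ t, (z (.inr t)).toAdd.natAbs

theorem lampLength_le_latticeLength [Fintype ι] (z : ι ⊕ ι → Multiplicative ℤ) :
    lampLength z ≤ latticeLength z := by
  rw [latticeLength, Fintype.sum_sum_type]
  exact Nat.le_add_left _ _

variable [DecidableEq ι]

/-- An element of `H` is related to the pairs consisting of an upper bound on the length and of the
class in the abelianization of some word representing it. -/
def wordRel (θ : ι → H) :
    Submonoid (H × (Multiplicative ℕ × Abelianization (FreeGroup ι))) where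
  carrier := {p | ∃ w, FreeGroup.lift θ w = p.1 ∧ w.norm ≤ p.2.1.toAdd ∧ .of w = p.2.2}
  one_mem' := ⟨1, by simp⟩
  mul_mem' := by
    rintro ⟨_, _, _⟩ ⟨_, _, _⟩ ⟨w, rfl, hw, rfl⟩ ⟨w', rfl, hw', rfl⟩
    exact ⟨w * w', map_mul _ _ _, (FreeGroup.norm_mul_le w w').trans (add_le_add hw hw'),
      map_mul _ _ _⟩

theorem perfectNorm_le_of_mem_wordRel {θ : ι → H} {h : H} {m : ℕ}
    (hm : (h, (.ofAdd m, 1)) ∈ wordRel θ) : perfectNorm (Set.range θ) h ≤ m := by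
  obtain ⟨w, rfl, hnorm, hw⟩ := hm
  exact (perfectNorm_range_lift_le θ ((QuotientGroup.eq_one_iff w).1 hw)).trans hnorm

theorem zpow_mem_wordRel (θ : ι → H) (t : ι) (n : ℤ) :
    (θ t ^ n, (.ofAdd n.natAbs, .of (.of t) ^ n)) ∈ wordRel θ := by
  refine ⟨.of t ^ n, by simp, ?_, map_zpow _ _ _⟩
  obtain ⟨k, rfl | rfl⟩ := n.eq_nat_or_neg <;> simp

variable [Fintype ι]

/-- The class of the lamps switched by a lattice vector in the abelianization of the free group. -/
def lampClass : (ι ⊕ ι → Multiplicative ℤ) →* Abelianization (FreeGroup ι) :=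
  ∏ t, (zpowersHom _ (.of (.of t))).comp (Pi.evalMonoidHom _ (.inr t))

theorem lampRep_mem (θ : ι → H) (s : ℕ) (b : Letter (ι ⊕ ι)) :
    (lampRep θ s b, (.ofAdd (lampLength b.2), lampClass b.2)) ∈
      wreathRel (Torus ι s) (wordRel θ) := by
  have hcost : ∏ t, (Multiplicative.ofAdd (b.2 (.inr t)).toAdd.natAbs,
      Abelianization.of (FreeGroup.of t) ^ (b.2 (.inr t)).toAdd) =
        (.ofAdd (lampLength b.2), lampClass b.2) :=
    Prod.ext (by simp [Prod.fst_prod, lampLength, ofAdd_sum])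
      (by simp [Prod.snd_prod, lampClass])
  rw [← hcost]
  exact wreathBase_extend_mem_wreathRel (antipode_injective s)
    fun t => zpow_mem_wordRel θ t (b.2 (.inr t)).toAdd

theorem hasLetterCost_levelRep (θ : ι → H) (s : ℕ) :
    HasLetterCost (iterRel (wreathRel ℤˣ (wreathRel (Torus ι s) (wordRel θ))) s) (levelRep θ s)
      fun z => (.ofAdd (lampLength z), lampClass z) :=
  .iterLift (ρ := baseRep θ s) (.wreathRep (fun _ => inl_mem_wreathRel _) (lampRep_mem θ s)) s

theorem perfectNorm_le_of_levelRep_eq {θ : ι → H} {s n : ℕ} {γ : PreGrigorchuk (ι ⊕ ι)}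
    (hγ : γ ∈ wordBall (generators (ι ⊕ ι)) n) {h : H}
    (hrep : levelRep θ s γ = lampEmbedding H ι s h)
    (hproj : latticeProj γ = 1) :
    perfectNorm (Set.range θ) h ≤ n := by
  obtain ⟨m, hm, hmem⟩ := (hasLetterCost_levelRep θ s).exists_mem_of_mem_wordBall
    lampLength_le_latticeLength hγ
  rw [hrep, hproj, map_one] at hmem
  exact (perfectNorm_le_of_mem_wordRel
    (mem_of_wreathSingle_mem (mem_of_wreathSingle_mem (mem_of_iterSingle_mem hmem)))).trans hm

theorem perfectNorm_le_wordNorm_derivedEmbedding {H : ℕ → Type*} [∀ s, Group (H s)]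
    {θ : ∀ s, ι → H s} (hθ : ∀ s, Subgroup.closure (Set.range (θ s)) = ⊤) (s : ℕ)
    (h : commutator (H s)) :
    perfectNorm (Set.range (θ s)) (h : H s) ≤
      wordNorm ((totalRep θ).rangeRestrict '' generators (ι ⊕ ι)) (derivedEmbedding hθ s h) := by
  obtain ⟨γ, hγ, hrep⟩ := (image_wordBall _ _ _).ge
    (mem_wordBall_wordNorm (closure_rangeRestrict_image_generators θ) (derivedEmbedding hθ s h))
  have htotal : totalRep θ γ = totalEmbedding H ι s h := congrArg Subtype.val hrep
  rw [totalRep_apply, totalEmbedding_apply, Prod.mk.injEq] at htotal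
  exact perfectNorm_le_of_levelRep_eq hγ
    ((congrFun htotal.1 s).trans (Pi.mulSingle_eq_same _ _)) htotal.2

end LowerBound

section MainTheorem

open PreGrigorchuk

theorem imbed_derived_subgroups_in_subexp_group_general.{u, v} {ι : Type u} [Finite ι]
    {H : ℕ → Type v} [∀ s, Group (H s)] [∀ s, Finite (H s)] (θ : ∀ s, ι → H s)
    (hθ : ∀ s, Subgroup.closure (Set.range (θ s)) = ⊤) :
    ∃ (W : Type (max u v)) (_ : Group W) (T : Finset W),
      Subgroup.closure (T : Set W) = ⊤ ∧ SubexpGrowth (T : Set W) ∧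
      ∀ s, ∃ Ψ : commutator (H s) →* W, Function.Injective Ψ ∧ ∀ h h' : commutator (H s),
        perfectDist (Set.range (θ s)) (h : H s) h' ≤ wordDist (T : Set W) (Ψ h) (Ψ h') ∧
        wordDist (T : Set W) (Ψ h) (Ψ h') ≤
          10 * 2 ^ s * perfectDist (Set.range (θ s)) (h : H s) h' := by
  classical
  cases nonempty_fintype ι
  have hT : ((totalRep θ).rangeRestrict '' generators (ι ⊕ ι)).Finite := finite_generators.image _
  refine ⟨(totalRep θ).range, inferInstance, hT.toFinset, ?_⟩
  rw [hT.coe_toFinset]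
  refine ⟨closure_rangeRestrict_image_generators θ, subexpGrowth_rangeRestrict_image_generators θ,
    fun s => ⟨derivedEmbedding hθ s, derivedEmbedding_injective hθ s, fun h h' => ?_⟩⟩
  rw [wordDist, ← map_inv, ← map_mul]
  exact ⟨perfectNorm_le_wordNorm_derivedEmbedding hθ s (h * h'⁻¹),
    wordNorm_derivedEmbedding_le hθ s (h * h'⁻¹)⟩

end MainTheorem

/-- Proposition (imbedding a sequence of derived subgroups in groups of
subexponential growth, with uniformly controlled distortion): there are
assignments of constants `K, L` — depending only on `s`, on `S ∩ [0, s)` and on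
the groups `H j` for `j ∈ S`, `j < s`, but not on `H j` for `j ≥ s` — such
that for every sequence `(H i)` of `d`-generated finite groups and every
`S ⊆ ℕ` there is a finitely generated group `W_S` of subexponential growth
admitting, for each `s ∈ S`, an injective homomorphism
`Ψ_s : [H_s, H_s] → W_S` which is `(K, L)`-bi-Lipschitz from the perfect
metric on `[H_s, H_s]` to the word metric on `W_S`. -/
theorem imbed_derived_subgroups_in_subexp_group (d : ℕ) :
    ∃ K L : Set ℕ → (ℕ → MarkedGroup d) → ℕ → ℝ,
      -- the constants depend only on `s`, `S ∩ [0, s)` and the groups `H j`,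
      -- `j ∈ S`, `j < s`:
      (∀ (S S' : Set ℕ) (Hs Hs' : ℕ → MarkedGroup d) (s : ℕ),
        (∀ j < s, j ∈ S ↔ j ∈ S') → (∀ j < s, j ∈ S → Hs j = Hs' j) →
        K S Hs s = K S' Hs' s ∧ L S Hs s = L S' Hs' s) ∧
      ∀ (Hs : ℕ → MarkedGroup d) (S : Set ℕ),
        ∃ (W : Type) (_ : Group W) (T : Finset W),
          Subgroup.closure (T : Set W) = ⊤ ∧
          SubexpGrowth (T : Set W) ∧
          ∀ s ∈ S, 1 ≤ K S Hs s ∧ 1 ≤ L S Hs s ∧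
            ∃ Ψ : commutator (Hs s).carrier →* W, Function.Injective Ψ ∧
              ∀ h h' : commutator (Hs s).carrier,
                (perfectDist ((Hs s).gens : Set (Hs s).carrier)
                    (h : (Hs s).carrier) (h' : (Hs s).carrier) : ℝ) / K S Hs s ≤
                    (wordDist (T : Set W) (Ψ h) (Ψ h') : ℝ) ∧
                (wordDist (T : Set W) (Ψ h) (Ψ h') : ℝ) ≤
                    L S Hs s * (perfectDist ((Hs s).gens : Set (Hs s).carrier)
                      (h : (Hs s).carrier) (h' : (Hs s).carrier) : ℝ) := by
  refine ⟨fun _ _ _ => 1, fun _ _ s => 10 * 2 ^ s, fun _ _ _ _ _ _ _ => ⟨rfl, rfl⟩, fun Hs S => ?_⟩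
  let θ (s : ℕ) (t : Fin d) : (Hs s).carrier :=
    ((Hs s).gens.equivFinOfCardEq (Hs s).card_gens).symm t
  have hrange (s : ℕ) : Set.range (θ s) = (Hs s).gens :=
    (((Hs s).gens.equivFinOfCardEq (Hs s).card_gens).symm.surjective.range_comp _).trans
      Subtype.range_coe
  obtain ⟨W, _, T, hT, hgrowth, hΨ⟩ := imbed_derived_subgroups_in_subexp_group_general θ
    fun s => (hrange s).symm ▸ (Hs s).isGen
  refine ⟨W, inferInstance, T, hT, hgrowth, fun s _ => ⟨le_rfl, ?_, ?_⟩⟩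
  · exact one_le_mul_of_one_le_of_one_le (by norm_num) (one_le_pow₀ one_le_two)
  obtain ⟨Ψ, hinj, hdist⟩ := hΨ s
  refine ⟨Ψ, hinj, fun h h' => ?_⟩
  obtain ⟨hlower, hupper⟩ := hdist h h'
  rw [hrange] at hlower hupper
  beta_reduce
  rw [div_one]
  exact_mod_cast And.intro hlower hupper
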